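/- arXiv:2404.04529 — 2 statements merged into one kernel-verified Lean document; each statement's English description precedes it below -/
import Mathlib

section
/- The equivalence relation of topological isomorphism restricted to automorphism groups of countable ω-categorical structures with weak elimination of imaginaries is smooth; that is, there is a Borel map from the space of oligomorphic closed subgroups of Sym(ω) whose canonical structure has weak elimination of imaginaries to a standard Borel space such that two such groups are topologically isomorphic if and only if their images are equal. -/
namespace Paper

/-- The Polish group topology on `Sym(ω)` (pointwise convergence, refined so that
inversion is continuous; the open subgroups are the same). -/
instance permTopology : TopologicalSpace (Equiv.Perm ℕ) :=
  letI : TopologicalSpace ℕ := ⊥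
  TopologicalSpace.induced
    (fun g => ((g : ℕ → ℕ), ((g⁻¹ : Equiv.Perm ℕ) : ℕ → ℕ))) inferInstance

/-- The pointwise stabilizer of `A ⊆ ω` inside a subgroup `G ≤ Sym(ω)`. -/
def stabIn (G : Subgroup (Equiv.Perm ℕ)) (A : Set ℕ) : Subgroup G where
  carrier := {g | ∀ a ∈ A, (g : Equiv.Perm ℕ) a = a}
  one_mem' := fun a _ => rfl
  mul_mem' := by
    intro f g hf hg a ha
    have h1 := hg a ha
    have h2 := hf a ha
    simp only [Set.mem_setOf_eq, Subgroup.coe_mul, Equiv.Perm.coe_mul, Function.comp_apply]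
    rw [h1, h2]
  inv_mem' := by
    intro g hg a ha
    have h1 := hg a ha
    simp only [Set.mem_setOf_eq, InvMemClass.coe_inv]
    conv_lhs => rw [← h1]
    simp

/-- The setwise stabilizer of `A ⊆ ω` inside a subgroup `G ≤ Sym(ω)`. -/
def sstabIn (G : Subgroup (Equiv.Perm ℕ)) (A : Set ℕ) : Subgroup G where
  carrier := {g | (g : Equiv.Perm ℕ) '' A = A}
  one_mem' := by
    simp only [Set.mem_setOf_eq, OneMemClass.coe_one, Equiv.Perm.coe_one, Set.image_id]
  mul_mem' := by
    intro f g hf hg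
    simp only [Set.mem_setOf_eq, Subgroup.coe_mul, Equiv.Perm.coe_mul] at *
    rw [Set.image_comp, hg, hf]
  inv_mem' := by
    intro f hf
    simp only [Set.mem_setOf_eq, InvMemClass.coe_inv] at *
    conv_lhs => rw [← hf]
    rw [Set.image_image]
    ext a
    constructor
    · rintro ⟨x, hx, rfl⟩
      simpa using hx
    · intro ha
      exact ⟨a, ha, by simp⟩

/-- The Galois-algebraic closure of `A ⊆ ω` with respect to `G ≤ Sym(ω)`: the elements
whose orbit under the pointwise stabilizer of `A` in `G` is finite. -/
def aclIn (G : Subgroup (Equiv.Perm ℕ)) (A : Set ℕ) : Set ℕ :=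
  {b | (MulAction.orbit (stabIn G A) b).Finite}

/-- `G ≤ Sym(ω)` is oligomorphic: finitely many orbits on `ωⁿ` for every `n`. -/
def IsOligomorphic (G : Subgroup (Equiv.Perm ℕ)) : Prop :=
  ∀ n : ℕ, Finite (MulAction.orbitRel.Quotient G (Fin n → ℕ))

/-- Weak elimination of imaginaries for the canonical (ω-categorical) structure of
`G ≤ Sym(ω)`, phrased group-theoretically: every open subgroup of `G` lies between the
pointwise and the setwise stabilizer of a unique smallest finite Galois-algebraically
closed subset of `ω`. -/
def HasWEIgrp (G : Subgroup (Equiv.Perm ℕ)) : Prop :=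
  ∀ H : Subgroup G, IsOpen (H : Set G) →
    ∃ K : Set ℕ, (K.Finite ∧ aclIn G K = K ∧ stabIn G K ≤ H ∧ H ≤ sstabIn G K) ∧
      ∀ K' : Set ℕ,
        (K'.Finite ∧ aclIn G K' = K' ∧ stabIn G K' ≤ H ∧ H ≤ sstabIn G K') → K ⊆ K'

/-- The space of closed subgroups of `Sym(ω)`. -/
def ClosedSubgroups : Type :=
  {G : Subgroup (Equiv.Perm ℕ) // IsClosed (G : Set (Equiv.Perm ℕ))}

/-- The Effros Borel structure on the space of closed subgroups of `Sym(ω)`, generated by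
the sets `{F : F ∩ U ≠ ∅}` for `U` open. -/
instance effros : MeasurableSpace ClosedSubgroups :=
  MeasurableSpace.generateFrom
    {S | ∃ U : Set (Equiv.Perm ℕ), IsOpen U ∧
      S = {G : ClosedSubgroups | (((G.1 : Subgroup (Equiv.Perm ℕ)) : Set (Equiv.Perm ℕ)) ∩ U).Nonempty}}

/-- The Borel space of oligomorphic closed subgroups of `Sym(ω)` whose canonical
structure has weak elimination of imaginaries. -/
def OligWEISpace : Type :=
  {G : ClosedSubgroups // IsOligomorphic G.1 ∧ HasWEIgrp G.1}

instance : MeasurableSpace OligWEISpace := by unfold OligWEISpace; infer_instance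

/-- Topological isomorphism of two subgroups of `Sym(ω)`: a group isomorphism which is a
homeomorphism for the subspace topologies. -/
def TopIso (G H : Subgroup (Equiv.Perm ℕ)) : Prop :=
  ∃ e : G ≃* H, Continuous (e : G → H) ∧ Continuous (e.symm : H → G)

/-!
A group `G` is coded by its local maps, the restrictions of elements of `G` to finite
algebraically closed sets, with the ternary relation `z ⊆ x ∘ y`. Weak elimination of imaginaries
makes the pointwise stabilizers of these sets recognisable in the topological group `G`, and a local
map corresponds to a coset of such a stabilizer, so topological isomorphisms of groups are the same
as isomorphisms of their structures of local maps. The number of local submaps of a local map is an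
invariant, and by oligomorphicity there are, up to conjugation by `G`, only finitely many tuples of
local maps with prescribed numbers. Hence a back-and-forth argument shows that this structure is
determined up to isomorphism by its Ehrenfeucht–Fraïssé types of finite rank. These range over
finite sets and depend on `G` in a Borel way.
-/

open Equiv (Perm)

open scoped Pointwise Topology

/-! ### Back-and-forth between graded ternary structures -/

/-- A ternary relation on a set of elements of `X`, each of which is assigned a level. -/
structure GradedStructure (X : Type*) where
  carrier : Set X
  rel : X → X → X → Prop
  level : X → ℕ

/-- The Ehrenfeucht–Fraïssé types of rank `r` of `k`-tuples: a type of rank `0` is a diagram of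
equality and of the ternary relation, and a type of rank `r + 1` also records, for every level
up to `r`, the types of rank `r` of the extensions by an element of that level. Bounding the level
keeps the set of types of each rank finite. -/
def EFType : ℕ → ℕ → Type
  | 0, k => Set (Fin k × Fin k) × Set (Fin k × Fin k × Fin k)
  | r + 1, k => EFType r k × (Fin (r + 1) → Set (EFType r (k + 1)))

instance EFType.finite : ∀ r k, Finite (EFType r k)
  | 0, k => inferInstanceAs (Finite (Set (Fin k × Fin k) × Set (Fin k × Fin k × Fin k)))
  | r + 1, k =>
    have := EFType.finite r
    inferInstanceAs (Finite (EFType r k × (Fin (r + 1) → Set (EFType r (k + 1)))))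

namespace GradedStructure

variable {X Y : Type*} {S : GradedStructure X} {T : GradedStructure Y} {k : ℕ}

/-- The Ehrenfeucht–Fraïssé type of rank `r` of a tuple. -/
def efType (S : GradedStructure X) : (r : ℕ) → {k : ℕ} → (Fin k → X) → EFType r k
  | 0, _, a => ({p | a p.1 = a p.2}, {p | S.rel (a p.1) (a p.2.1) (a p.2.2)})
  | r + 1, _, a => (S.efType r a,
      fun n => {t | ∃ c ∈ S.carrier, S.level c = n ∧ S.efType r (Fin.cons c a) = t})

/-- The relation `ρ` is the graph of an isomorphism from `S` to `T`. -/
structure IsIso (S : GradedStructure X) (T : GradedStructure Y) (ρ : X → Y → Prop) : Prop where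
  mem_left {x y} : ρ x y → x ∈ S.carrier
  mem_right {x y} : ρ x y → y ∈ T.carrier
  exists_right {x} : x ∈ S.carrier → ∃ y, ρ x y
  exists_left {y} : y ∈ T.carrier → ∃ x, ρ x y
  eq_iff {x x' y y'} : ρ x y → ρ x' y' → (x = x' ↔ y = y')
  rel_iff {x₁ x₂ x₃ y₁ y₂ y₃} : ρ x₁ y₁ → ρ x₂ y₂ → ρ x₃ y₃ →
    (S.rel x₁ x₂ x₃ ↔ T.rel y₁ y₂ y₃)
  level_eq {x y} : ρ x y → S.level x = T.level y

theorem IsIso.symm {ρ : X → Y → Prop} (h : IsIso S T ρ) : IsIso T S (flip ρ) where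
  mem_left := h.mem_right
  mem_right := h.mem_left
  exists_right := h.exists_left
  exists_left := h.exists_right
  eq_iff hxy hxy' := (h.eq_iff hxy hxy').symm
  rel_iff h₁ h₂ h₃ := (h.rel_iff h₁ h₂ h₃).symm
  level_eq hxy := (h.level_eq hxy).symm

theorem IsIso.efType_eq {ρ : X → Y → Prop} (h : IsIso S T ρ) (r : ℕ) {a : Fin k → X}
    {b : Fin k → Y} (hab : ∀ i, ρ (a i) (b i)) : S.efType r a = T.efType r b := by
  induction r generalizing k with
  | zero =>
    refine Prod.ext (Set.ext fun p => h.eq_iff (hab _) (hab _))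
      (Set.ext fun p => h.rel_iff (hab _) (hab _) (hab _))
  | succ r ih =>
    refine Prod.ext (ih hab) (funext fun n => Set.ext fun t => ⟨?_, ?_⟩)
    · rintro ⟨c, hc, hn, rfl⟩
      obtain ⟨d, hd⟩ := h.exists_right hc
      exact ⟨d, h.mem_right hd, by rw [← h.level_eq hd, hn], (ih (Fin.cases hd hab)).symm⟩
    · rintro ⟨d, hd, hn, rfl⟩
      obtain ⟨c, hc⟩ := h.exists_left hd
      exact ⟨c, h.mem_left hc, by rw [h.level_eq hc, hn], ih (Fin.cases hc hab)⟩

theorem efType_eq_of_le {a : Fin k → X} {b : Fin k → Y} {r s : ℕ} (hrs : r ≤ s)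
    (h : S.efType s a = T.efType s b) : S.efType r a = T.efType r b := by
  induction hrs with
  | refl => exact h
  | step _ ih => exact ih (congrArg Prod.fst h)

/-- Over every tuple from the structure, the elements of a given level realise only finitely many
types. -/
def HasFinitelyManyTypes (S : GradedStructure X) : Prop :=
  ∀ (k : ℕ) (a : Fin k → X), (∀ i, a i ∈ S.carrier) → ∀ n,
    ((fun c r => S.efType r (Fin.cons c a)) '' {c ∈ S.carrier | S.level c = n}).Finite

theorem HasFinitelyManyTypes.exists_extension (hT : T.HasFinitelyManyTypes) {a : Fin k → X}
    {b : Fin k → Y} (hb : ∀ i, b i ∈ T.carrier) (hab : ∀ r, S.efType r a = T.efType r b)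
    {c : X} (hc : c ∈ S.carrier) :
    ∃ d ∈ T.carrier, S.level c = T.level d ∧
      ∀ r, S.efType r (Fin.cons c a : Fin (k + 1) → X) = T.efType r (Fin.cons d b) := by
  by_contra! hne
  have ne_eventually : ∀ᶠ r in Filter.atTop,
      ∀ t ∈ (fun d r => T.efType r (Fin.cons d b)) '' {d ∈ T.carrier | T.level d = S.level c},
        S.efType r (Fin.cons c a) ≠ t r := by
    rw [Filter.eventually_all_finite (hT k b hb _)]
    rintro _ ⟨d, ⟨hd, hn⟩, rfl⟩
    obtain ⟨r, hr⟩ := hne d hd hn.symm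
    exact (Filter.eventually_ge_atTop r).mono fun s hrs hs => hr (efType_eq_of_le hrs hs)
  obtain ⟨r, hne_r, hr⟩ := (ne_eventually.and (Filter.eventually_ge_atTop (S.level c))).exists
  have types_eq := congrFun (congrArg Prod.snd (hab (r + 1))) ⟨S.level c, Nat.lt_succ_of_le hr⟩
  obtain ⟨d, hd, hn, hdr⟩ := types_eq.subset ⟨c, hc, rfl, rfl⟩
  exact hne_r _ ⟨d, ⟨hd, hn⟩, rfl⟩ hdr.symm

/-- `s` is a finite partial map, given by its graph, which matches the Ehrenfeucht–Fraïssé types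
of all ranks. -/
def IsPartialIso (S : GradedStructure X) (T : GradedStructure Y) (s : Set (X × Y)) : Prop :=
  ∃ (k : ℕ) (a : Fin k → X) (b : Fin k → Y),
    (∀ i, a i ∈ S.carrier) ∧ (∀ i, b i ∈ T.carrier) ∧ (∀ i, S.level (a i) = T.level (b i)) ∧
      (∀ r, S.efType r a = T.efType r b) ∧ Set.range (fun i => (a i, b i)) = s

theorem IsPartialIso.symm {s : Set (X × Y)} (h : IsPartialIso S T s) :
    IsPartialIso T S (Prod.swap '' s) := by
  obtain ⟨k, a, b, ha, hb, hlevel, htype, rfl⟩ := h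
  exact ⟨k, b, a, hb, ha, fun i => (hlevel i).symm, fun r => (htype r).symm,
    Set.range_comp Prod.swap fun i => (a i, b i)⟩

theorem IsPartialIso.exists_superset_left (hT : T.HasFinitelyManyTypes) {s : Set (X × Y)}
    (h : IsPartialIso S T s) {c : X} (hc : c ∈ S.carrier) :
    ∃ s', IsPartialIso S T s' ∧ s ⊆ s' ∧ ∃ d, (c, d) ∈ s' := by
  obtain ⟨k, a, b, ha, hb, hlevel, htype, rfl⟩ := h
  obtain ⟨d, hd, hcd, hr⟩ := hT.exists_extension hb htype hc
  refine ⟨_, ⟨k + 1, Fin.cons c a, Fin.cons d b, Fin.cases hc ha, Fin.cases hd hb,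
    Fin.cases hcd hlevel, hr, rfl⟩, ?_, d, 0, rfl⟩
  rintro _ ⟨i, rfl⟩
  exact ⟨i.succ, rfl⟩

theorem IsPartialIso.exists_superset_right (hS : S.HasFinitelyManyTypes) {s : Set (X × Y)}
    (h : IsPartialIso S T s) {d : Y} (hd : d ∈ T.carrier) :
    ∃ s', IsPartialIso S T s' ∧ s ⊆ s' ∧ ∃ c, (c, d) ∈ s' := by
  obtain ⟨s', hs', hss', c, hc⟩ := h.symm.exists_superset_left hS hd
  refine ⟨_, hs'.symm, fun p hp => ⟨p.swap, hss' ⟨p, hp, rfl⟩, rfl⟩, c, _, hc, rfl⟩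

theorem IsPartialIso.mem_and_level_eq {s : Set (X × Y)} (h : IsPartialIso S T s) {c : X} {d : Y}
    (hcd : (c, d) ∈ s) : c ∈ S.carrier ∧ d ∈ T.carrier ∧ S.level c = T.level d := by
  obtain ⟨k, a, b, ha, hb, hlevel, -, rfl⟩ := h
  obtain ⟨i, ⟨⟩⟩ := hcd
  exact ⟨ha i, hb i, hlevel i⟩

theorem isIso_sUnion_of_directedOn {I : Set (Set (X × Y))} (hI : ∀ s ∈ I, IsPartialIso S T s)
    (hdir : DirectedOn (· ⊆ ·) I) (hS : ∀ c ∈ S.carrier, ∃ s ∈ I, ∃ d, (c, d) ∈ s)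
    (hT : ∀ d ∈ T.carrier, ∃ s ∈ I, ∃ c, (c, d) ∈ s) :
    IsIso S T fun c d => (c, d) ∈ ⋃₀ I where
  mem_left := fun ⟨s, hs, hcd⟩ => ((hI s hs).mem_and_level_eq hcd).1
  mem_right := fun ⟨s, hs, hcd⟩ => ((hI s hs).mem_and_level_eq hcd).2.1
  level_eq := fun ⟨s, hs, hcd⟩ => ((hI s hs).mem_and_level_eq hcd).2.2
  exists_right hc :=
    let ⟨s, hs, d, hd⟩ := hS _ hc
    ⟨d, s, hs, hd⟩
  exists_left hd :=
    let ⟨s, hs, c, hc⟩ := hT _ hd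
    ⟨c, s, hs, hc⟩
  eq_iff := by
    rintro c c' d d' ⟨s, hs, h⟩ ⟨s', hs', h'⟩
    obtain ⟨u, hu, hsu, hsu'⟩ := hdir s hs s' hs'
    obtain ⟨k, a, b, -, -, -, htype, rfl⟩ := hI u hu
    obtain ⟨i, ⟨⟩⟩ := hsu h
    obtain ⟨j, ⟨⟩⟩ := hsu' h'
    exact Set.ext_iff.1 (congrArg Prod.fst (htype 0)) (i, j)
  rel_iff := by
    rintro c₁ c₂ c₃ d₁ d₂ d₃ ⟨s₁, hs₁, h₁⟩ ⟨s₂, hs₂, h₂⟩ ⟨s₃, hs₃, h₃⟩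
    obtain ⟨v, hv, hsv₁, hsv₂⟩ := hdir s₁ hs₁ s₂ hs₂
    obtain ⟨u, hu, hvu, hsu₃⟩ := hdir v hv s₃ hs₃
    obtain ⟨k, a, b, -, -, -, htype, rfl⟩ := hI u hu
    obtain ⟨i₁, ⟨⟩⟩ := hvu (hsv₁ h₁)
    obtain ⟨i₂, ⟨⟩⟩ := hvu (hsv₂ h₂)
    obtain ⟨i₃, ⟨⟩⟩ := hsu₃ h₃
    exact Set.ext_iff.1 (congrArg Prod.snd (htype 0)) (i₁, i₂, i₃)

theorem exists_isIso_of_efType_eq [Countable X] [Countable Y] (hS : S.HasFinitelyManyTypes)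
    (hT : T.HasFinitelyManyTypes)
    (h : ∀ r, S.efType r (Fin.elim0 : Fin 0 → X) = T.efType r (Fin.elim0 : Fin 0 → Y)) :
    ∃ ρ, IsIso S T ρ := by
  let defined : S.carrier ⊕ T.carrier → Order.Cofinal {s // IsPartialIso S T s} :=
    Sum.elim
      (fun c => ⟨{s | ∃ d, (c.1, d) ∈ s.1}, fun s => by
        obtain ⟨s', hs', hle, hd⟩ := s.2.exists_superset_left hT c.2
        exact ⟨⟨s', hs'⟩, hd, hle⟩⟩)
      (fun d => ⟨{s | ∃ c, (c, d.1) ∈ s.1}, fun s => by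
        obtain ⟨s', hs', hle, hc⟩ := s.2.exists_superset_right hS d.2
        exact ⟨⟨s', hs'⟩, hc, hle⟩⟩)
  have := Encodable.ofCountable (S.carrier ⊕ T.carrier)
  let empty : {s // IsPartialIso S T s} :=
    ⟨∅, 0, Fin.elim0, Fin.elim0, fun i => i.elim0, fun i => i.elim0, fun i => i.elim0, h,
      Set.range_eq_empty _⟩
  let I := Order.idealOfCofinals empty defined
  refine ⟨_, isIso_sUnion_of_directedOn (I := Subtype.val '' (I : Set {s // IsPartialIso S T s}))
    ?_ ?_ (fun c hc => ?_) fun d hd => ?_⟩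
  · rintro _ ⟨s, -, rfl⟩
    exact s.2
  · rintro _ ⟨s, hs, rfl⟩ _ ⟨s', hs', rfl⟩
    obtain ⟨u, hu, hsu, hsu'⟩ := I.directed s hs s' hs'
    exact ⟨u, ⟨u, hu, rfl⟩, hsu, hsu'⟩
  · obtain ⟨s, hs, hsI⟩ := Order.cofinal_meets_idealOfCofinals empty defined (.inl ⟨c, hc⟩)
    exact ⟨s, ⟨s, hsI, rfl⟩, hs⟩
  · obtain ⟨s, hs, hsI⟩ := Order.cofinal_meets_idealOfCofinals empty defined (.inr ⟨d, hd⟩)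
    exact ⟨s, ⟨s, hsI, rfl⟩, hs⟩

theorem exists_isIso_iff [Countable X] [Countable Y] (hS : S.HasFinitelyManyTypes)
    (hT : T.HasFinitelyManyTypes) : (∃ ρ, IsIso S T ρ) ↔
      ∀ r, S.efType r (Fin.elim0 : Fin 0 → X) = T.efType r (Fin.elim0 : Fin 0 → Y) :=
  ⟨fun ⟨_, hρ⟩ r => hρ.efType_eq r fun i => i.elim0, exists_isIso_of_efType_eq hS hT⟩

end GradedStructure

/-! ### Borel families of graded structures -/

instance (r k : ℕ) : MeasurableSpace (EFType r k) := ⊤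

instance (r k : ℕ) : DiscreteMeasurableSpace (EFType r k) := ⟨fun _ => trivial⟩

theorem GradedStructure.measurable_efType {Ω X : Type*} [MeasurableSpace Ω] [Countable X]
    {S : Ω → GradedStructure X} (hcarrier : ∀ x, Measurable fun ω => x ∈ (S ω).carrier)
    (hrel : ∀ x y z, Measurable fun ω => (S ω).rel x y z)
    (hlevel : ∀ x, Measurable fun ω => (S ω).level x) (r : ℕ) {k : ℕ} (a : Fin k → X) :
    Measurable fun ω => (S ω).efType r a := by
  induction r generalizing k with
  | zero =>
    refine measurable_to_countable' fun t => ?_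
    have preimage_eq : (fun ω => (S ω).efType 0 a) ⁻¹' {t} =
        {ω | (∀ p, a p.1 = a p.2 ↔ p ∈ t.1) ∧
          ∀ p, (S ω).rel (a p.1) (a p.2.1) (a p.2.2) ↔ p ∈ t.2} :=
      Set.ext fun ω => Prod.ext_iff.trans (and_congr Set.ext_iff Set.ext_iff)
    rw [preimage_eq]
    exact measurableSet_setOfPred.2 <| measurable_const.and <|
      Measurable.forall fun p => (hrel _ _ _).iff measurable_const
  | succ r ih =>
    refine measurable_to_countable' fun t => ?_
    have preimage_eq : (fun ω => (S ω).efType (r + 1) a) ⁻¹' {t} =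
        {ω | (S ω).efType r a = t.1 ∧ ∀ (n : Fin (r + 1)) u,
          (∃ c, c ∈ (S ω).carrier ∧ (S ω).level c = n ∧ (S ω).efType r (Fin.cons c a) = u) ↔
            u ∈ t.2 n} :=
      Set.ext fun ω => Prod.ext_iff.trans <| and_congr Iff.rfl <|
        funext_iff.trans <| forall_congr' fun n => Set.ext_iff
    have measurable_eq {m : ℕ} (b : Fin m → X) (u : EFType r m) :
        Measurable fun ω => (S ω).efType r b = u :=
      measurableSet_setOfPred.1 (ih b (measurableSet_singleton u))
    rw [preimage_eq]
    exact measurableSet_setOfPred.2 <| (measurable_eq a _).and <| Measurable.forall fun n =>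
      Measurable.forall fun u => Measurable.iff (Measurable.exists fun c => (hcarrier c).and <|
        (measurableSet_setOfPred.1 (hlevel c (measurableSet_singleton _))).and
          (measurable_eq _ u)) measurable_const

/-! ### Pointwise convergence -/

section Topology

theorem nhds_perm (g : Perm ℕ) : 𝓝 g = ⨅ a, Filter.principal {g' : Perm ℕ | g' a = g a} := by
  have comap_nhds (u : Perm ℕ → ℕ → ℕ) :
      (𝓝 (u g)).comap u = ⨅ a, Filter.principal {g' | u g' a = u g a} := by
    simp only [nhds_pi, Filter.pi, nhds_discrete, Filter.comap_iInf, Filter.comap_pure,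
      Filter.comap_principal]
    rfl
  have inv_apply_eq (g' : Perm ℕ) (a : ℕ) : g' (g⁻¹ a) = g (g⁻¹ a) ↔ g'⁻¹ a = g⁻¹ a := by
    rw [Equiv.Perm.inv_eq_iff_eq, eq_comm (a := a)]
    simp
  rw [nhds_induced, nhds_prod_eq, Filter.comap_prod]
  refine (congrArg₂ _ (comap_nhds (fun g => g)) (comap_nhds (fun g => (g⁻¹ : Perm ℕ)))).trans
    (inf_eq_left.2 (le_iInf fun a => iInf_le_of_le ((g⁻¹ : Perm ℕ) a) (le_of_eq ?_)))
  simp only [inv_apply_eq]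

theorem hasBasis_nhds_perm (g : Perm ℕ) :
    (𝓝 g).HasBasis (fun _ : Finset ℕ => True) fun F => {g' | ∀ a ∈ F, g' a = g a} := by
  rw [nhds_perm]
  refine ⟨fun U => ⟨fun hU => ?_, fun ⟨F, _, hF⟩ => ?_⟩⟩
  · obtain ⟨s, hs, hsU⟩ := (Filter.hasBasis_iInf_principal_finite _).mem_iff.1 hU
    exact ⟨hs.toFinset, trivial, fun g' hg' => hsU (by simpa using hg')⟩
  · exact (Filter.hasBasis_iInf_principal_finite _).mem_iff.2
      ⟨F, F.finite_toSet, fun g' hg' => hF (by simpa using hg')⟩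

variable {G : Subgroup (Perm ℕ)}

theorem hasBasis_nhds_subgroup (g : G) :
    (𝓝 g).HasBasis (fun _ : Finset ℕ => True) fun F => {g' | ∀ a ∈ F, g' • a = g • a} := by
  rw [nhds_subtype]
  exact (hasBasis_nhds_perm (g : Perm ℕ)).comap _

theorem isOpen_of_stabIn_le {V : Subgroup G} {F : Finset ℕ} (hF : stabIn G F ≤ V) :
    IsOpen (V : Set G) := by
  refine isOpen_iff_mem_nhds.2 fun g hg => (hasBasis_nhds_subgroup g).mem_iff.2
    ⟨F, trivial, fun g' hg' => ?_⟩
  have : g⁻¹ * g' ∈ V := hF fun a ha => by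
    change (g⁻¹ * g') • a = a
    rw [mul_smul, hg' a ha, inv_smul_smul]
  simpa using V.mul_mem hg this

end Topology

/-! ### Finite algebraically closed sets -/

section AlgClosed

theorem relIndex_stabilizer_ne_zero_iff {Γ α : Type*} [Group Γ] [MulAction Γ α] {V : Subgroup Γ}
    {b : α} : (MulAction.stabilizer Γ b).relIndex V ≠ 0 ↔ (MulAction.orbit V b).Finite := by
  have : (MulAction.stabilizer Γ b).relIndex V = (MulAction.stabilizer V b).index := rfl
  rw [this, MulAction.index_stabilizer]
  exact ⟨Set.finite_of_ncard_ne_zero,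
    fun h => Set.ncard_ne_zero_of_mem (MulAction.mem_orbit_self b) h⟩

/-- The finite set `K` is Galois-algebraically closed with respect to `G`. -/
def AlgClosed (G : Subgroup (Perm ℕ)) (K : Finset ℕ) : Prop :=
  aclIn G K = K

variable {G H : Subgroup (Perm ℕ)} {K L : Finset ℕ}

theorem mem_stabIn {A : Set ℕ} {g : G} : g ∈ stabIn G A ↔ ∀ a ∈ A, g • a = a :=
  Iff.rfl

theorem mem_aclIn {A : Set ℕ} {b : ℕ} :
    b ∈ aclIn G A ↔ ∃ F : Finset ℕ, ∀ g ∈ stabIn G A, g • b ∈ F := by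
  refine ⟨fun h => ⟨h.toFinset, fun g hg => ?_⟩, fun ⟨F, hF⟩ => F.finite_toSet.subset ?_⟩
  · exact h.mem_toFinset.2 ⟨⟨g, hg⟩, rfl⟩
  · rintro _ ⟨g, rfl⟩
    exact hF g g.2

theorem stabIn_anti {A B : Set ℕ} (h : A ⊆ B) : stabIn G B ≤ stabIn G A :=
  fun _ hg a ha => hg a (h ha)

theorem subset_aclIn (A : Set ℕ) : A ⊆ aclIn G A := fun b hb =>
  mem_aclIn.2 ⟨{b}, fun _ hg => Finset.mem_singleton.2 (mem_stabIn.1 hg b hb)⟩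

theorem algClosed_iff : AlgClosed G K ↔ aclIn G K ⊆ K :=
  ⟨fun h => h.subset, fun h => h.antisymm (subset_aclIn _)⟩

theorem AlgClosed.mem (hK : AlgClosed G K) {b : ℕ} {F : Finset ℕ}
    (hF : ∀ g ∈ stabIn G K, g • b ∈ F) : b ∈ K :=
  Finset.mem_coe.1 (hK.subset (mem_aclIn.2 ⟨F, hF⟩))

theorem AlgClosed.subset (hL : AlgClosed G L) (h : stabIn G L ≤ stabIn G K) : K ⊆ L := fun b hb =>
  hL.mem fun _ hg => Finset.mem_singleton.2 (h hg b hb)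

theorem AlgClosed.inter (hK : AlgClosed G K) (hL : AlgClosed G L) : AlgClosed G (K ∩ L) := by
  refine algClosed_iff.2 fun b hb => ?_
  obtain ⟨F, hF⟩ := mem_aclIn.1 hb
  rw [Finset.coe_inter] at hF ⊢
  exact ⟨hK.mem fun g hg => hF g (stabIn_anti Set.inter_subset_left hg),
    hL.mem fun g hg => hF g (stabIn_anti Set.inter_subset_right hg)⟩

theorem AlgClosed.smul (hK : AlgClosed G K) (g : G) : AlgClosed G (g • K) := by
  refine algClosed_iff.2 fun b hb => ?_
  obtain ⟨F, hF⟩ := mem_aclIn.1 hb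
  refine Finset.inv_smul_mem_iff.1 (hK.mem (F := g⁻¹ • F) fun u hu => ?_)
  have conj_mem : g * u * g⁻¹ ∈ stabIn G (g • K : Finset ℕ) := fun a ha => by
    have : u • g⁻¹ • a = g⁻¹ • a := hu _ (Finset.inv_smul_mem_iff.2 ha)
    change (g * u * g⁻¹) • a = a
    rw [mul_smul, mul_smul, this, smul_inv_smul]
  rw [Finset.mem_inv_smul_finset_iff]
  simpa only [mul_smul] using hF _ conj_mem

theorem HasWEIgrp.exists_algClosed (hG : HasWEIgrp G) {V : Subgroup G} (hV : IsOpen (V : Set G)) :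
    ∃ K : Finset ℕ, AlgClosed G K ∧ stabIn G K ≤ V ∧ V ≤ sstabIn G K := by
  obtain ⟨K, ⟨hfin, hK⟩, -⟩ := hG V hV
  lift K to Finset ℕ using hfin
  exact ⟨K, hK⟩

theorem HasWEIgrp.exists_algClosed_superset (hG : HasWEIgrp G) (F : Finset ℕ) :
    ∃ K : Finset ℕ, AlgClosed G K ∧ F ⊆ K := by
  obtain ⟨K, hK, hKF, -⟩ := hG.exists_algClosed (isOpen_of_stabIn_le (le_refl (stabIn G F)))
  exact ⟨K, hK, hK.subset hKF⟩

theorem stabIn_eq_iInf (F : Finset ℕ) :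
    stabIn G F = ⨅ a : F, MulAction.stabilizer G (a : ℕ) := by
  ext g
  simp [mem_stabIn, Subgroup.mem_iInf]

theorem finite_orbit_of_le_sstabIn {V : Subgroup G} (hV : V ≤ sstabIn G K) {b : ℕ} (hb : b ∈ K) :
    (MulAction.orbit V b).Finite := by
  refine K.finite_toSet.subset ?_
  rintro _ ⟨g, rfl⟩
  exact (hV g.2).subset ⟨b, hb, rfl⟩

theorem relIndex_stabIn_ne_zero_of_le_sstabIn {V : Subgroup G} (hV : V ≤ sstabIn G K) :
    (stabIn G K).relIndex V ≠ 0 := by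
  rw [stabIn_eq_iInf]
  exact Subgroup.relIndex_iInf_ne_zero fun a =>
    relIndex_stabilizer_ne_zero_iff.2 (finite_orbit_of_le_sstabIn hV a.2)

/-- Sandwich `e (stabIn G K)` between a pointwise and a setwise stabilizer of a closed `L`, and
`e⁻¹ (stabIn H L)` between those of a closed `M`. Both inclusions have finite index, so `M ⊆ K`,
and the two groups agree. -/
theorem AlgClosed.exists_map_stabIn (hG : HasWEIgrp G) (hH : HasWEIgrp H) (e : G ≃* H)
    (he : Continuous e) (he' : Continuous e.symm) (hK : AlgClosed G K) :
    ∃ L : Finset ℕ, AlgClosed H L ∧ ∀ g, e g ∈ stabIn H L ↔ g ∈ stabIn G K := by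
  obtain ⟨L, hL, hLV, hVL⟩ := hH.exists_algClosed (V := (stabIn G K).comap e.symm.toMonoidHom)
    ((isOpen_of_stabIn_le le_rfl).preimage he')
  obtain ⟨M, -, hMN, hNM⟩ := hG.exists_algClosed (V := (stabIn H L).comap e.toMonoidHom)
    ((isOpen_of_stabIn_le le_rfl).preimage he)
  have comap_le : (stabIn H L).comap e.toMonoidHom ≤ stabIn G K := fun g hg => by
    simpa using hLV hg
  have finiteIndex : ((stabIn H L).comap e.toMonoidHom).relIndex (stabIn G K) ≠ 0 := by
    rw [Subgroup.relIndex_comap]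
    have : (stabIn G K).map e.toMonoidHom = (stabIn G K).comap e.symm.toMonoidHom :=
      Subgroup.map_equiv_eq_comap_symm e _
    rw [this]
    exact relIndex_stabIn_ne_zero_of_le_sstabIn hVL
  have subset : M ⊆ K := fun b hb => Eq.subset hK <|
    relIndex_stabilizer_ne_zero_iff.1 <| Subgroup.relIndex_ne_zero_trans
      (relIndex_stabilizer_ne_zero_iff.2 (finite_orbit_of_le_sstabIn hNM hb)) finiteIndex
  exact ⟨L, hL, fun g => ⟨fun hg => comap_le hg, fun hg => hMN (stabIn_anti subset hg)⟩⟩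

end AlgClosed

/-! ### Local maps -/

section LocalMaps

/-- The graph of the restriction of `g` to `K`. -/
def graphOn {Γ : Type*} [SMul Γ ℕ] (g : Γ) (K : Finset ℕ) : Finset (ℕ × ℕ) :=
  K.image fun a => (a, g • a)

/-- `g` extends the partial map with graph `x`. -/
def Extends {Γ : Type*} [SMul Γ ℕ] (g : Γ) (x : Finset (ℕ × ℕ)) : Prop :=
  ∀ p ∈ x, g • p.1 = p.2

/-- The partial map `z` is contained in the composition `x ∘ y`. -/
def SubComp (x y z : Finset (ℕ × ℕ)) : Prop :=
  ∀ p ∈ z, ∃ b, (p.1, b) ∈ y ∧ (b, p.2) ∈ x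

/-- The local maps of `G`: the restrictions of elements of `G` to finite algebraically closed
sets, encoded by their graphs. -/
def localMaps (G : Subgroup (Perm ℕ)) : Set (Finset (ℕ × ℕ)) :=
  {x | AlgClosed G (x.image Prod.fst) ∧ ∃ g : G, Extends g x}

open Classical in
/-- The local maps of `G` contained in `x`. -/
noncomputable def subMaps (G : Subgroup (Perm ℕ)) (x : Finset (ℕ × ℕ)) :
    Finset (Finset (ℕ × ℕ)) :=
  {y ∈ x.powerset | y ∈ localMaps G}

/-- The ternary structure of local maps of `G`, graded by the number of local submaps. Inclusion
and composition of local maps can be expressed by the elements of `G` extending them, so the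
structure is an invariant of the topological group. -/
noncomputable def localStructure (G : Subgroup (Perm ℕ)) :
    GradedStructure (Finset (ℕ × ℕ)) where
  carrier := localMaps G
  rel := SubComp
  level x := (subMaps G x).card

variable {G : Subgroup (Perm ℕ)} {K : Finset ℕ} {x y z : Finset (ℕ × ℕ)}

theorem mem_subMaps : y ∈ subMaps G x ↔ y ⊆ x ∧ y ∈ localMaps G := by
  simp [subMaps]

section SMul

variable {Γ : Type*} [SMul Γ ℕ] {g h : Γ}

theorem image_fst_graphOn (g : Γ) (K : Finset ℕ) : (graphOn g K).image Prod.fst = K := by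
  simp [graphOn, Finset.image_image, Function.comp_def]

theorem image_snd_graphOn (g : Γ) (K : Finset ℕ) : (graphOn g K).image Prod.snd = g • K := by
  simp only [graphOn, Finset.image_image, Function.comp_def]
  rfl

theorem mem_graphOn {p : ℕ × ℕ} : p ∈ graphOn g K ↔ p.1 ∈ K ∧ g • p.1 = p.2 := by
  simp only [graphOn, Finset.mem_image, Prod.ext_iff]
  exact ⟨by rintro ⟨a, ha, rfl, h⟩; exact ⟨ha, h⟩, fun ⟨ha, h⟩ => ⟨_, ha, rfl, h⟩⟩

theorem extends_graphOn : Extends g (graphOn g K) := fun _ hp => (mem_graphOn.1 hp).2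

theorem Extends.mono (hx : Extends g x) (hyx : y ⊆ x) : Extends g y := fun p hp => hx p (hyx hp)

theorem Extends.mk_mem (hx : Extends g x) {a : ℕ} (ha : a ∈ x.image Prod.fst) :
    (a, g • a) ∈ x := by
  obtain ⟨p, hp, rfl⟩ := Finset.mem_image.1 ha
  rw [hx p hp]
  exact hp

theorem Extends.graphOn_eq (hx : Extends g x) : graphOn g (x.image Prod.fst) = x := by
  ext p
  rw [mem_graphOn]
  refine ⟨fun ⟨ha, hp⟩ => ?_, fun hp => ⟨Finset.mem_image_of_mem _ hp, hx p hp⟩⟩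
  have := hx.mk_mem ha
  rwa [hp] at this

theorem Extends.smul_eq (hg : Extends g x) (hh : Extends h x) {a : ℕ}
    (ha : a ∈ x.image Prod.fst) : g • a = h • a := by
  obtain ⟨p, hp, rfl⟩ := Finset.mem_image.1 ha
  rw [hg p hp, hh p hp]

end SMul

theorem extends_graphOn_iff {g h : G} :
    Extends g (graphOn h K) ↔ h⁻¹ * g ∈ stabIn G K := by
  simp only [Extends, mem_graphOn, mem_stabIn, mul_smul, inv_smul_eq_iff, Finset.mem_coe]
  exact ⟨fun hg a ha => hg (a, h • a) ⟨ha, rfl⟩, fun hg p ⟨ha, hp⟩ => (hg _ ha).trans hp⟩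

theorem graphOn_mem_localMaps (hK : AlgClosed G K) (g : G) : graphOn g K ∈ localMaps G :=
  ⟨by rwa [image_fst_graphOn], g, extends_graphOn⟩

theorem SubComp.extends_mul {g h : G} (hxyz : SubComp x y z) (hx : Extends g x)
    (hy : Extends h y) : Extends (g * h) z := fun p hp => by
  obtain ⟨b, hb, hb'⟩ := hxyz p hp
  rw [mul_smul, hy _ hb, hx _ hb']

theorem subComp_graphOn (g h : G) (K : Finset ℕ) :
    SubComp (graphOn g (h • K)) (graphOn h K) (graphOn (g * h) K) := fun p hp => by
  obtain ⟨hK, hp⟩ := mem_graphOn.1 hp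
  rw [mul_smul] at hp
  exact ⟨h • p.1, mem_graphOn.2 ⟨hK, rfl⟩, mem_graphOn.2 ⟨Finset.smul_mem_smul_finset hK, hp⟩⟩

theorem SubComp.image_fst_subset (h : SubComp x y z) : z.image Prod.fst ⊆ y.image Prod.fst := by
  rintro _ ha
  obtain ⟨p, hp, rfl⟩ := Finset.mem_image.1 ha
  obtain ⟨b, hb, -⟩ := h p hp
  exact Finset.mem_image.2 ⟨_, hb, rfl⟩

theorem SubComp.image_snd_subset (h : SubComp x y z) : z.image Prod.snd ⊆ x.image Prod.snd := by
  rintro _ ha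
  obtain ⟨p, hp, rfl⟩ := Finset.mem_image.1 ha
  obtain ⟨b, -, hb⟩ := h p hp
  exact Finset.mem_image.2 ⟨_, hb, rfl⟩

/-- The elements extending a local map form a coset of the stabilizer of its domain `K`, and
algebraic closedness recovers `K` from this stabilizer. -/
theorem mem_image_fst_of_forall_extends (hx : x ∈ localMaps G) {a b : ℕ}
    (h : ∀ g : G, Extends g x → g • a = b) : a ∈ x.image Prod.fst := by
  obtain ⟨hK, g, hg⟩ := hx
  refine hK.mem (F := {g⁻¹ • b}) fun u hu => Finset.mem_singleton.2 ?_
  have : Extends (g * u) x := by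
    rw [← hg.graphOn_eq, extends_graphOn_iff, inv_mul_cancel_left]
    exact hu
  rw [← h _ this, mul_smul, inv_smul_smul]

theorem subset_iff_forall_extends (hx : x ∈ localMaps G) :
    y ⊆ x ↔ ∀ g : G, Extends g x → Extends g y := by
  refine ⟨fun h g hg => hg.mono h, fun h p hp => ?_⟩
  obtain ⟨g, hg⟩ := hx.2
  have mem := hg.mk_mem (mem_image_fst_of_forall_extends hx fun g hg => h g hg p hp)
  rwa [h g hg p hp] at mem

theorem subComp_iff_forall_extends (hx : x ∈ localMaps G) (hy : y ∈ localMaps G) :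
    SubComp x y z ↔ ∀ g h : G, Extends g x → Extends h y → Extends (g * h) z := by
  refine ⟨fun hxyz g h hg hh => hxyz.extends_mul hg hh, fun hxyz p hp => ?_⟩
  obtain ⟨g, hg⟩ := hx.2
  obtain ⟨h, hh⟩ := hy.2
  have smul_eq (g' h' : G) (hg' : Extends g' x) (hh' : Extends h' y) : g' • h' • p.1 = p.2 := by
    rw [← mul_smul, hxyz g' h' hg' hh' p hp]
  refine ⟨h • p.1, hh.mk_mem (mem_image_fst_of_forall_extends hy fun h' hh' =>
    eq_inv_smul_iff.2 (smul_eq g h' hg hh')), ?_⟩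
  have mem := hg.mk_mem (mem_image_fst_of_forall_extends hx fun g' hg' => smul_eq g' h hg' hh)
  rwa [smul_eq g h hg hh] at mem

theorem Extends.of_subComp_self {g : G} (hg : Extends g x) (hx : SubComp x x x) :
    Extends (1 : G) x := fun p hp => by
  have : (g * g) • p.1 = g • p.1 := (hx.extends_mul hg hg p hp).trans (hg p hp).symm
  rw [mul_smul, smul_left_cancel_iff, hg p hp] at this
  rw [one_smul, this]

end LocalMaps

/-! ### Topological isomorphisms induce isomorphisms of local maps -/

section InducedIso

variable {G H : Subgroup (Perm ℕ)} {e : G ≃* H}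

/-- `e` maps the pointwise stabilizers of finite algebraically closed sets to such stabilizers. -/
def PreservesStabilizers (e : G ≃* H) : Prop :=
  ∀ K, AlgClosed G K → ∃ L, AlgClosed H L ∧ ∀ g, e g ∈ stabIn H L ↔ g ∈ stabIn G K

/-- The local maps `x` of `G` and `y` of `H` are restrictions of elements which correspond to each
other under `e`. -/
def InducedRel (e : G ≃* H) (x y : Finset (ℕ × ℕ)) : Prop :=
  x ∈ localMaps G ∧ y ∈ localMaps H ∧ ∀ g, Extends g x ↔ Extends (e g) y

theorem InducedRel.symm {x y : Finset (ℕ × ℕ)} (h : InducedRel e x y) : InducedRel e.symm y x :=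
  ⟨h.2.1, h.1, fun g => by rw [h.2.2, e.apply_symm_apply]⟩

theorem PreservesStabilizers.exists_inducedRel (he : PreservesStabilizers e) {x : Finset (ℕ × ℕ)}
    (hx : x ∈ localMaps G) : ∃ y, InducedRel e x y := by
  obtain ⟨g, hg⟩ := hx.2
  obtain ⟨L, hL, hKL⟩ := he _ hx.1
  refine ⟨graphOn (e g) L, hx, graphOn_mem_localMaps hL _, fun g' => ?_⟩
  rw [extends_graphOn_iff, ← map_inv, ← map_mul, hKL, ← extends_graphOn_iff, hg.graphOn_eq]

theorem InducedRel.subset_iff {x x' y y' : Finset (ℕ × ℕ)} (h : InducedRel e x y)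
    (h' : InducedRel e x' y') : x' ⊆ x ↔ y' ⊆ y := by
  rw [subset_iff_forall_extends h.1, subset_iff_forall_extends h.2.1, e.surjective.forall]
  simp only [h.2.2, h'.2.2]

theorem InducedRel.eq_iff {x x' y y' : Finset (ℕ × ℕ)} (h : InducedRel e x y)
    (h' : InducedRel e x' y') : x = x' ↔ y = y' := by
  rw [Finset.Subset.antisymm_iff, Finset.Subset.antisymm_iff, h.subset_iff h', h'.subset_iff h]

theorem InducedRel.card_subMaps_eq (he : PreservesStabilizers e)
    (he' : PreservesStabilizers e.symm) {x y : Finset (ℕ × ℕ)} (h : InducedRel e x y) :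
    (subMaps G x).card = (subMaps H y).card := by
  choose φ hφ using fun z (hz : z ∈ subMaps G x) => he.exists_inducedRel (mem_subMaps.1 hz).2
  refine Finset.card_bij φ (fun z hz => ?_) (fun z hz z' hz' hzz' => ?_) fun w hw => ?_
  · exact mem_subMaps.2 ⟨(h.subset_iff (hφ z hz)).1 (mem_subMaps.1 hz).1, (hφ z hz).2.1⟩
  · exact ((hφ z hz).eq_iff (hφ z' hz')).2 hzz'
  · obtain ⟨hwy, hw⟩ := mem_subMaps.1 hw
    obtain ⟨z, hz⟩ := he'.exists_inducedRel hw
    have hz_mem : z ∈ subMaps G x := mem_subMaps.2 ⟨(h.subset_iff hz.symm).2 hwy, hz.2.1⟩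
    exact ⟨z, hz_mem, ((hφ z hz_mem).eq_iff hz.symm).1 rfl⟩

theorem PreservesStabilizers.isIso (he : PreservesStabilizers e)
    (he' : PreservesStabilizers e.symm) :
    (localStructure G).IsIso (localStructure H) (InducedRel e) where
  mem_left h := h.1
  mem_right h := h.2.1
  exists_right hx := he.exists_inducedRel hx
  exists_left hy :=
    let ⟨x, hx⟩ := he'.exists_inducedRel hy
    ⟨x, hx.symm⟩
  eq_iff h h' := h.eq_iff h'
  rel_iff := by
    rintro x₁ x₂ x₃ y₁ y₂ y₃ ⟨hx₁, hy₁, h₁⟩ ⟨hx₂, hy₂, h₂⟩ ⟨-, -, h₃⟩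
    refine (subComp_iff_forall_extends hx₁ hx₂).trans
      (Iff.trans ?_ (subComp_iff_forall_extends hy₁ hy₂).symm)
    simp only [e.surjective.forall₂, h₁, h₂, h₃, map_mul]
  level_eq h := h.card_subMaps_eq he he'

end InducedIso

/-! ### Isomorphisms of local maps induce topological isomorphisms -/

section LiftIso

theorem exists_perm_of_directedOn {I : Set (Finset (ℕ × ℕ))} (hdir : DirectedOn (· ⊆ ·) I)
    (hI : ∀ y ∈ I, ∃ h : Perm ℕ, Extends h y) (hfst : ∀ a, ∃ y ∈ I, a ∈ y.image Prod.fst)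
    (hsnd : ∀ b, ∃ y ∈ I, b ∈ y.image Prod.snd) : ∃ f : Perm ℕ, ∀ y ∈ I, Extends f y := by
  have exists_common {p q : ℕ × ℕ} {y z} (hy : y ∈ I) (hz : z ∈ I) (hp : p ∈ y) (hq : q ∈ z) :
      ∃ h : Perm ℕ, h • p.1 = p.2 ∧ h • q.1 = q.2 := by
    obtain ⟨w, hw, hyw, hzw⟩ := hdir y hy z hz
    obtain ⟨h, hh⟩ := hI w hw
    exact ⟨h, hh p (hyw hp), hh q (hzw hq)⟩
  have exists_image (a : ℕ) : ∃ b, ∃ y ∈ I, (a, b) ∈ y := by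
    obtain ⟨y, hy, ha⟩ := hfst a
    obtain ⟨p, hp, rfl⟩ := Finset.mem_image.1 ha
    exact ⟨p.2, y, hy, hp⟩
  choose f Y hY hf using exists_image
  have f_eq {p : ℕ × ℕ} {y} (hy : y ∈ I) (hp : p ∈ y) : f p.1 = p.2 := by
    obtain ⟨h, h₁, h₂⟩ := exists_common (hY p.1) hy (hf p.1) hp
    exact h₁.symm.trans h₂
  have f_bijective : f.Bijective := by
    refine ⟨fun a a' haa' => ?_, fun b => ?_⟩
    · obtain ⟨h, h₁, h₂⟩ := exists_common (hY a) (hY a') (hf a) (hf a')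
      exact smul_left_cancel h (h₁.trans (haa'.trans h₂.symm))
    · obtain ⟨y, hy, hb⟩ := hsnd b
      obtain ⟨p, hp, rfl⟩ := Finset.mem_image.1 hb
      exact ⟨p.1, f_eq hy hp⟩
  exact ⟨Equiv.ofBijective f f_bijective, fun y hy p hp => f_eq hy hp⟩

theorem exists_superset_image_fst {I : Set (Finset (ℕ × ℕ))} (hdir : DirectedOn (· ⊆ ·) I)
    (hfst : ∀ a, ∃ y ∈ I, a ∈ y.image Prod.fst) (F : Finset ℕ) :
    ∃ y ∈ I, F ⊆ y.image Prod.fst := by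
  induction F using Finset.induction with
  | empty =>
    obtain ⟨y, hy, -⟩ := hfst 0
    exact ⟨y, hy, Finset.empty_subset _⟩
  | insert a F _ ih =>
    obtain ⟨y, hy, hFy⟩ := ih
    obtain ⟨z, hz, haz⟩ := hfst a
    obtain ⟨w, hw, hyw, hzw⟩ := hdir y hy z hz
    exact ⟨w, hw, Finset.insert_subset (Finset.image_subset_image hzw haz)
      (hFy.trans (Finset.image_subset_image hyw))⟩

theorem exists_extends_of_directedOn {H : Subgroup (Perm ℕ)} (hH : IsClosed (H : Set (Perm ℕ)))
    {I : Set (Finset (ℕ × ℕ))} (hdir : DirectedOn (· ⊆ ·) I) (hI : ∀ y ∈ I, ∃ h : H, Extends h y)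
    (hfst : ∀ a, ∃ y ∈ I, a ∈ y.image Prod.fst) (hsnd : ∀ b, ∃ y ∈ I, b ∈ y.image Prod.snd) :
    ∃ h : H, ∀ y ∈ I, Extends h y := by
  obtain ⟨f, hf⟩ := exists_perm_of_directedOn hdir
    (fun y hy => let ⟨h, hh⟩ := hI y hy; ⟨h, hh⟩) hfst hsnd
  have mem_closure : f ∈ closure (H : Set (Perm ℕ)) := by
    refine (mem_closure_iff_nhds_basis (hasBasis_nhds_perm f)).2 fun F _ => ?_
    obtain ⟨y, hy, hFy⟩ := exists_superset_image_fst hdir hfst F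
    obtain ⟨h, hh⟩ := hI y hy
    exact ⟨h, h.2, fun a ha => Extends.smul_eq (g := (h : Perm ℕ)) hh (hf y hy) (hFy ha)⟩
  exact ⟨⟨f, hH.closure_subset mem_closure⟩, hf⟩

variable {G H : Subgroup (Perm ℕ)} {ρ : Finset (ℕ × ℕ) → Finset (ℕ × ℕ) → Prop}
  {K L : Finset ℕ} {x x' y y' : Finset (ℕ × ℕ)}

namespace GradedStructure.IsIso

theorem extends_one (hρ : (localStructure G).IsIso (localStructure H) ρ) (hxy : ρ x y)
    (hx : Extends (1 : G) x) : Extends (1 : H) y := by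
  have subComp_self : SubComp x x x := fun p hp => by
    obtain ⟨a, b⟩ := p
    obtain rfl : a = b := by simpa using hx _ hp
    exact ⟨a, hp, hp⟩
  obtain ⟨-, h, hh⟩ := hρ.mem_right hxy
  exact hh.of_subComp_self ((hρ.rel_iff hxy hxy hxy).1 subComp_self)

theorem exists_graphOn_one (hρ : (localStructure G).IsIso (localStructure H) ρ)
    (hL : AlgClosed H L) : ∃ K, AlgClosed G K ∧ ρ (graphOn (1 : G) K) (graphOn (1 : H) L) := by
  obtain ⟨x, hx⟩ := hρ.exists_left (graphOn_mem_localMaps hL 1)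
  refine ⟨_, (hρ.mem_left hx).1, ?_⟩
  rwa [(hρ.symm.extends_one hx extends_graphOn).graphOn_eq]

theorem subset_image_fst (hρ : (localStructure G).IsIso (localStructure H) ρ)
    (hK : AlgClosed G K) (hKL : ρ (graphOn (1 : G) K) (graphOn (1 : H) L)) {g : G}
    (hy : ρ (graphOn g K) y) : L ⊆ y.image Prod.fst := by
  obtain ⟨z, hz⟩ := hρ.exists_right (graphOn_mem_localMaps (hK.smul g) g⁻¹)
  have inv_comp : SubComp (graphOn g⁻¹ (g • K)) (graphOn g K) (graphOn (1 : G) K) := by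
    simpa only [inv_mul_cancel] using subComp_graphOn g⁻¹ g K
  have := SubComp.image_fst_subset ((hρ.rel_iff hz hy hKL).1 inv_comp)
  rwa [image_fst_graphOn] at this

theorem subset_image_snd (hρ : (localStructure G).IsIso (localStructure H) ρ)
    (hK : AlgClosed G K) (hKL : ρ (graphOn (1 : G) K) (graphOn (1 : H) L)) {g : G}
    (hy : ρ (graphOn g (g⁻¹ • K)) y) : L ⊆ y.image Prod.snd := by
  obtain ⟨z, hz⟩ := hρ.exists_right (graphOn_mem_localMaps hK g⁻¹)
  have comp_inv : SubComp (graphOn g (g⁻¹ • K)) (graphOn g⁻¹ K) (graphOn (1 : G) K) := by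
    simpa only [mul_inv_cancel] using subComp_graphOn g g⁻¹ K
  have := SubComp.image_snd_subset ((hρ.rel_iff hy hz hKL).1 comp_inv)
  rwa [image_snd_graphOn, one_smul] at this

theorem subset_of_subset (hρ : (localStructure G).IsIso (localStructure H) ρ) (hxy : ρ x y)
    (hxy' : ρ x' y') (hx : x' ⊆ x) : y' ⊆ y := by
  obtain ⟨w, hw⟩ := hρ.exists_right (graphOn_mem_localMaps (hρ.mem_left hxy').1 1)
  have comp_one : SubComp x (graphOn (1 : G) (x'.image Prod.fst)) x' := fun p hp =>
    ⟨p.1, mem_graphOn.2 ⟨Finset.mem_image.2 ⟨p, hp, rfl⟩, one_smul _ _⟩, hx hp⟩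
  intro p hp
  obtain ⟨b, hb, hbp⟩ := (hρ.rel_iff hxy hw hxy').1 comp_one p hp
  have : p.1 = b := by simpa using hρ.extends_one hw extends_graphOn _ hb
  rwa [← this] at hbp

theorem exists_graphOn_superset (hρ : (localStructure G).IsIso (localStructure H) ρ)
    (hH : HasWEIgrp H) (g : G) (F : Finset ℕ) :
    ∃ K y, ρ (graphOn g K) y ∧ F ⊆ y.image Prod.fst := by
  obtain ⟨L, hL, hFL⟩ := hH.exists_algClosed_superset F
  obtain ⟨K, hK, hKL⟩ := hρ.exists_graphOn_one hL
  obtain ⟨y, hy⟩ := hρ.exists_right (graphOn_mem_localMaps hK g)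
  exact ⟨K, y, hy, hFL.trans (hρ.subset_image_fst hK hKL hy)⟩

end GradedStructure.IsIso

/-- `h` extends the images under `ρ` of all the restrictions of `g`. -/
def Matches (ρ : Finset (ℕ × ℕ) → Finset (ℕ × ℕ) → Prop) (g : G) (h : H) : Prop :=
  ∀ ⦃x y⦄, ρ x y → Extends g x → Extends h y

variable {g g' : G} {h h' : H}

theorem Matches.unique (hρ : (localStructure G).IsIso (localStructure H) ρ) (hH : HasWEIgrp H)
    (hgh : Matches ρ g h) (hgh' : Matches ρ g h') : h = h' := by
  refine Subtype.ext (Equiv.ext fun a => ?_)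
  obtain ⟨K, y, hy, ha⟩ := hρ.exists_graphOn_superset hH g {a}
  exact (hgh hy extends_graphOn).smul_eq (hgh' hy extends_graphOn)
    (Finset.singleton_subset_iff.1 ha)

theorem Matches.mul (hρ : (localStructure G).IsIso (localStructure H) ρ)
    (hgh : Matches ρ g h) (hgh' : Matches ρ g' h') : Matches ρ (g * g') (h * h') := by
  intro x y hxy hx
  have hK := (hρ.mem_left hxy).1
  obtain ⟨z, hz⟩ := hρ.exists_right (graphOn_mem_localMaps (hK.smul g') g)
  obtain ⟨z', hz'⟩ := hρ.exists_right (graphOn_mem_localMaps hK g')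
  have subComp := subComp_graphOn g g' (x.image Prod.fst)
  rw [hx.graphOn_eq] at subComp
  exact SubComp.extends_mul ((hρ.rel_iff hz hz' hxy).1 subComp) (hgh hz extends_graphOn)
    (hgh' hz' extends_graphOn)

theorem Matches.eq_of_flip (hρ : (localStructure G).IsIso (localStructure H) ρ)
    (hG : HasWEIgrp G) (hgh : Matches ρ g h) (hgh' : Matches (flip ρ) h g') : g' = g := by
  refine Subtype.ext (Equiv.ext fun a => ?_)
  obtain ⟨K, hK, ha⟩ := hG.exists_algClosed_superset {a}
  obtain ⟨y, hy⟩ := hρ.exists_right (graphOn_mem_localMaps hK g)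
  have extends_g' : Extends g' (graphOn g K) := hgh' hy (hgh hy extends_graphOn)
  refine extends_g'.smul_eq extends_graphOn ?_
  rwa [image_fst_graphOn, ← Finset.singleton_subset_iff]

theorem exists_matches (hρ : (localStructure G).IsIso (localStructure H) ρ) (hG : HasWEIgrp G)
    (hH : HasWEIgrp H) (hHc : IsClosed (H : Set (Perm ℕ))) (g : G) : ∃ h : H, Matches ρ g h := by
  have directed : DirectedOn (· ⊆ ·) {y | ∃ x, ρ x y ∧ Extends g x} := by
    rintro y ⟨x, hxy, hx⟩ y' ⟨x', hxy', hx'⟩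
    obtain ⟨K, hK, hxK⟩ := hG.exists_algClosed_superset (x.image Prod.fst ∪ x'.image Prod.fst)
    obtain ⟨z, hz⟩ := hρ.exists_right (graphOn_mem_localMaps hK g)
    have subset_graphOn {u} (hu : Extends g u) (huK : u.image Prod.fst ⊆ K) : u ⊆ graphOn g K :=
      fun p hp => mem_graphOn.2 ⟨huK (Finset.mem_image_of_mem _ hp), hu p hp⟩
    obtain ⟨hxK, hxK'⟩ := Finset.union_subset_iff.1 hxK
    exact ⟨z, ⟨_, hz, extends_graphOn⟩, hρ.subset_of_subset hz hxy (subset_graphOn hx hxK),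
      hρ.subset_of_subset hz hxy' (subset_graphOn hx' hxK')⟩
  have exists_fst (a : ℕ) : ∃ y ∈ {y | ∃ x, ρ x y ∧ Extends g x}, a ∈ y.image Prod.fst := by
    obtain ⟨K, y, hy, ha⟩ := hρ.exists_graphOn_superset hH g {a}
    exact ⟨y, ⟨_, hy, extends_graphOn⟩, Finset.singleton_subset_iff.1 ha⟩
  have exists_snd (b : ℕ) : ∃ y ∈ {y | ∃ x, ρ x y ∧ Extends g x}, b ∈ y.image Prod.snd := by
    obtain ⟨L, hL, hbL⟩ := hH.exists_algClosed_superset {b}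
    obtain ⟨K, hK, hKL⟩ := hρ.exists_graphOn_one hL
    obtain ⟨y, hy⟩ := hρ.exists_right (graphOn_mem_localMaps (hK.smul g⁻¹) g)
    exact ⟨y, ⟨_, hy, extends_graphOn⟩,
      hρ.subset_image_snd hK hKL hy (Finset.singleton_subset_iff.1 hbL)⟩
  obtain ⟨h, hh⟩ := exists_extends_of_directedOn hHc directed
    (fun y ⟨x, hxy, _⟩ => (hρ.mem_right hxy).2) exists_fst exists_snd
  exact ⟨h, fun x y hxy hx => hh y ⟨x, hxy, hx⟩⟩

theorem continuous_of_matches (hρ : (localStructure G).IsIso (localStructure H) ρ)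
    (hH : HasWEIgrp H) {f : G → H} (hf : ∀ g, Matches ρ g (f g)) : Continuous f := by
  refine continuous_iff_continuousAt.2 fun g =>
    ((hasBasis_nhds_subgroup g).tendsto_iff (hasBasis_nhds_subgroup (f g))).2 fun F _ => ?_
  obtain ⟨K, y, hy, hF⟩ := hρ.exists_graphOn_superset hH g F
  refine ⟨K, trivial, fun g' hg' a ha => ?_⟩
  have extends_g' : Extends g' (graphOn g K) := fun p hp => by
    obtain ⟨hK, hp⟩ := mem_graphOn.1 hp
    exact (hg' _ hK).trans hp
  exact (hf g' hy extends_g').smul_eq (hf g hy extends_graphOn) (hF ha)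

theorem GradedStructure.IsIso.topIso (hρ : (localStructure G).IsIso (localStructure H) ρ)
    (hG : HasWEIgrp G) (hH : HasWEIgrp H) (hGc : IsClosed (G : Set (Perm ℕ)))
    (hHc : IsClosed (H : Set (Perm ℕ))) : TopIso G H := by
  choose f hf using exists_matches hρ hG hH hHc
  choose f' hf' using exists_matches hρ.symm hH hG hGc
  let e : G ≃* H :=
    { toFun := f
      invFun := f'
      left_inv := fun g => (hf g).eq_of_flip hρ hG (hf' (f g))
      right_inv := fun h => (hf' h).eq_of_flip hρ.symm hH (hf (f' h))
      map_mul' := fun g g' => (hf _).unique hρ hH ((hf g).mul hρ (hf g')) }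
  exact ⟨e, continuous_of_matches hρ hH hf, continuous_of_matches hρ.symm hG hf'⟩

theorem topIso_iff_exists_isIso {G H : Subgroup (Perm ℕ)} (hG : HasWEIgrp G) (hH : HasWEIgrp H)
    (hGc : IsClosed (G : Set (Perm ℕ))) (hHc : IsClosed (H : Set (Perm ℕ))) :
    TopIso G H ↔ ∃ ρ, (localStructure G).IsIso (localStructure H) ρ := by
  refine ⟨fun ⟨e, he, he'⟩ => ?_, fun ⟨_, hρ⟩ => hρ.topIso hG hH hGc hHc⟩
  have preserves : PreservesStabilizers e := fun _ hK => hK.exists_map_stabIn hG hH e he he'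
  have preserves_symm : PreservesStabilizers e.symm := fun _ hL =>
    hL.exists_map_stabIn hH hG e.symm he' he
  exact ⟨_, preserves.isIso preserves_symm⟩

end LiftIso

/-! ### Finiteness of types -/

section FiniteTypes

variable {G : Subgroup (Perm ℕ)} {L : Finset ℕ} {x : Finset (ℕ × ℕ)}

theorem IsOligomorphic.exists_finset (hG : IsOligomorphic G) (ι : Type*) [Finite ι] :
    ∃ B : Finset ℕ, ∀ s : ι → ℕ, ∃ g : G, ∀ i, g • s i ∈ B := by
  obtain ⟨n, ⟨e⟩⟩ := Finite.exists_equiv_fin ι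
  have := hG n
  have finite_entries :
      (⋃ q : MulAction.orbitRel.Quotient G (Fin n → ℕ), Set.range q.out).Finite :=
    Set.finite_iUnion fun q => Set.finite_range q.out
  refine ⟨finite_entries.toFinset, fun s => ?_⟩
  let q : MulAction.orbitRel.Quotient G (Fin n → ℕ) := ⟦s ∘ e.symm⟧
  obtain ⟨g, hg⟩ : q.out ∈ MulAction.orbit G (s ∘ e.symm) :=
    MulAction.orbitRel_apply.1 (Quotient.mk_out (s ∘ e.symm))
  refine ⟨g, fun i => finite_entries.mem_toFinset.2 (Set.mem_iUnion.2 ⟨q, e i, ?_⟩)⟩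
  rw [← hg]
  simp

theorem preservesStabilizers_conj (g : G) : PreservesStabilizers (MulAut.conj g) := fun K hK => by
  refine ⟨g • K, hK.smul g, fun h => ?_⟩
  simp only [mem_stabIn, Finset.coe_smul_finset, ← Set.image_smul, Set.forall_mem_image,
    MulAut.conj_apply, mul_smul, inv_smul_smul, smul_left_cancel_iff]

theorem extends_conj_smul_iff {g h : G} : Extends (MulAut.conj g h) (g • x) ↔ Extends h x := by
  simp only [Extends, ← Finset.mem_coe, Finset.coe_smul_finset, ← Set.image_smul,
    Set.forall_mem_image, MulAut.conj_apply, Prod.smul_fst, Prod.smul_snd, mul_smul, inv_smul_smul,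
    smul_left_cancel_iff]

theorem image_fst_smul (g : G) (x : Finset (ℕ × ℕ)) :
    (g • x).image Prod.fst = g • x.image Prod.fst :=
  Finset.image_smul_comm _ _ _ fun _ => rfl

theorem inducedRel_conj_smul (g : G) (hx : x ∈ localMaps G) :
    InducedRel (MulAut.conj g) x (g • x) := by
  obtain ⟨h, hh⟩ := hx.2
  refine ⟨hx, ⟨?_, _, extends_conj_smul_iff.2 hh⟩, fun _ => extends_conj_smul_iff.symm⟩
  rw [image_fst_smul]
  exact hx.1.smul g

theorem isIso_conj (g : G) :
    (localStructure G).IsIso (localStructure G) (InducedRel (MulAut.conj g)) :=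
  (preservesStabilizers_conj g).isIso (by
    rw [← MulAut.inv_def, ← map_inv]
    exact preservesStabilizers_conj g⁻¹)

theorem inter_product_mem_localMaps (hx : x ∈ localMaps G) (hL : AlgClosed G L) :
    x ∩ L ×ˢ L ∈ localMaps G := by
  obtain ⟨hK, g, hg⟩ := hx
  refine ⟨?_, g, hg.mono Finset.inter_subset_left⟩
  have domain_eq : (x ∩ L ×ˢ L).image Prod.fst = x.image Prod.fst ∩ L ∩ g⁻¹ • L := by
    ext a
    simp only [Finset.mem_image, Finset.mem_inter, Finset.mem_product,
      Finset.mem_inv_smul_finset_iff]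
    constructor
    · rintro ⟨p, ⟨hp, h₁, h₂⟩, rfl⟩
      exact ⟨⟨⟨p, hp, rfl⟩, h₁⟩, (hg p hp).symm ▸ h₂⟩
    · rintro ⟨⟨⟨p, hp, rfl⟩, h₁⟩, h₂⟩
      exact ⟨p, ⟨hp, h₁, hg p hp ▸ h₂⟩, rfl⟩
  rw [domain_eq]
  exact (hK.inter hL).inter (hL.smul g⁻¹)

/-- The `s j` are elements of `x` chosen outside each proper local submap. -/
theorem exists_generators {n : ℕ} (hx : x ∈ localMaps G) (hn : (subMaps G x).card = n) :
    ∃ s : Fin n → ℕ × ℕ, ∀ L, AlgClosed G L → (∀ j, s j ∈ L ×ˢ L) → x ⊆ L ×ˢ L := by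
  have exists_not_mem (y : Finset (ℕ × ℕ)) : ∃ p, ¬x ⊆ y → p ∈ x ∧ p ∉ y := by
    by_cases h : x ⊆ y
    · exact ⟨0, fun h' => absurd h h'⟩
    · obtain ⟨p, hp⟩ := Finset.not_subset.1 h
      exact ⟨p, fun _ => hp⟩
  choose s hs using exists_not_mem
  let e := (subMaps G x).equivFinOfCardEq hn
  refine ⟨fun j => s (e.symm j), fun L hL hsL => ?_⟩
  by_contra hxL
  have mem : x ∩ L ×ˢ L ∈ subMaps G x :=
    mem_subMaps.2 ⟨Finset.inter_subset_left, inter_product_mem_localMaps hx hL⟩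
  obtain ⟨hsx, hs_inter⟩ := hs (x ∩ L ×ˢ L) fun h => hxL (h.trans Finset.inter_subset_right)
  have hs_mem := hsL (e ⟨_, mem⟩)
  simp only [e.symm_apply_apply] at hs_mem
  exact hs_inter (Finset.mem_inter.2 ⟨hsx, hs_mem⟩)

theorem IsOligomorphic.exists_smul_subset (hG : IsOligomorphic G) (hG' : HasWEIgrp G) {ι : Type*}
    [Finite ι] (n : ι → ℕ) : ∃ L : Finset ℕ, ∀ x : ι → Finset (ℕ × ℕ), (∀ i, x i ∈ localMaps G) →
      (∀ i, (subMaps G (x i)).card = n i) → ∃ g : G, ∀ i, g • x i ⊆ L ×ˢ L := by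
  obtain ⟨B, hB⟩ := hG.exists_finset ((Σ i, Fin (n i)) ⊕ (Σ i, Fin (n i)))
  obtain ⟨L, hL, hBL⟩ := hG'.exists_algClosed_superset B
  refine ⟨L, fun x hx hn => ?_⟩
  choose s hs using fun i => exists_generators (hx i) (hn i)
  obtain ⟨g, hg⟩ := hB (Sum.elim (fun j => (s j.1 j.2).1) fun j => (s j.1 j.2).2)
  have mem_smul {a : ℕ} (ha : g • a ∈ B) : a ∈ g⁻¹ • L :=
    Finset.mem_inv_smul_finset_iff.2 (hBL ha)
  refine ⟨g, fun i => Finset.smul_finset_subset_iff.2 ((hs i _ (hL.smul g⁻¹) fun j =>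
    Finset.mem_product.2 ⟨mem_smul (hg (.inl ⟨i, j⟩)), mem_smul (hg (.inr ⟨i, j⟩))⟩).trans ?_)⟩
  intro p hp
  obtain ⟨h₁, h₂⟩ := Finset.mem_product.1 hp
  exact Finset.mem_inv_smul_finset_iff.2 (Finset.mem_product.2
    ⟨Finset.mem_inv_smul_finset_iff.1 h₁, Finset.mem_inv_smul_finset_iff.1 h₂⟩)

theorem IsOligomorphic.hasFinitelyManyTypes (hG : IsOligomorphic G) (hG' : HasWEIgrp G) :
    (localStructure G).HasFinitelyManyTypes := by
  intro k a ha n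
  obtain ⟨L, hL⟩ := hG.exists_smul_subset hG'
    (Fin.cons n fun i => (subMaps G (a i)).card : Fin (k + 1) → ℕ)
  let tuples : Set (Fin (k + 1) → Finset (ℕ × ℕ)) := Set.univ.pi fun _ => (L ×ˢ L).powerset
  have finite_tuples : tuples.Finite := Set.Finite.pi fun _ => Finset.finite_toSet _
  refine (finite_tuples.image fun z r => (localStructure G).efType r z).subset ?_
  rintro _ ⟨c, ⟨hc, hn⟩, rfl⟩
  have mem_localMaps : ∀ i, (Fin.cons c a : Fin (k + 1) → _) i ∈ localMaps G := Fin.cases hc ha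
  obtain ⟨g, hg⟩ := hL (Fin.cons c a) mem_localMaps (Fin.cases hn fun _ => rfl)
  exact ⟨fun i => g • (Fin.cons c a : Fin (k + 1) → _) i, fun i _ => Finset.mem_powerset.2 (hg i),
    funext fun r => ((isIso_conj g).efType_eq r fun i =>
      inducedRel_conj_smul g (mem_localMaps i)).symm⟩

end FiniteTypes

/-! ### Borel dependence of the local maps on the group -/

section Borel

theorem isOpen_setOf_apply_mem (a : ℕ) (s : Set ℕ) : IsOpen {g : Perm ℕ | g a ∈ s} := by
  refine isOpen_iff_mem_nhds.2 fun g hg =>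
    (hasBasis_nhds_perm g).mem_iff.2 ⟨{a}, trivial, fun g' hg' => ?_⟩
  rw [Set.mem_ofPred] at hg ⊢
  rwa [hg' a (Finset.mem_singleton_self a)]

theorem isOpen_setOf_forall_apply_eq {ι : Type*} (s : Finset ι) (a b : ι → ℕ) :
    IsOpen {g : Perm ℕ | ∀ i ∈ s, g (a i) = b i} := by
  simp only [Set.ofPred_forall]
  exact isOpen_biInter_finset fun i _ => isOpen_setOf_apply_mem (a i) {b i}

theorem measurable_exists_mem {U : Set (Perm ℕ)} (hU : IsOpen U) :
    Measurable fun G : ClosedSubgroups => ∃ g ∈ G.1, g ∈ U :=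
  measurableSet_setOfPred.1 (MeasurableSpace.measurableSet_generateFrom ⟨U, hU, rfl⟩)

theorem algClosed_iff_exists {G : Subgroup (Perm ℕ)} {K : Finset ℕ} : AlgClosed G K ↔
    ∀ b, (∃ F : Finset ℕ, ¬∃ g ∈ G, (∀ a ∈ K, g a = a) ∧ g b ∉ F) → b ∈ K := by
  rw [algClosed_iff]
  refine forall_congr' fun b => imp_congr_left (mem_aclIn.trans (exists_congr fun F => ?_))
  simp only [mem_stabIn, Subtype.forall, not_exists, not_and, not_not]
  rfl

theorem measurable_algClosed (K : Finset ℕ) :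
    Measurable fun G : ClosedSubgroups => AlgClosed G.1 K := by
  simp only [algClosed_iff_exists]
  refine Measurable.forall fun b => Measurable.imp (Measurable.exists fun F => ?_)
    measurable_const
  exact (measurable_exists_mem ((isOpen_setOf_forall_apply_eq K id id).inter
    (isOpen_setOf_apply_mem b {c | c ∉ F}))).not

theorem measurable_mem_localMaps (x : Finset (ℕ × ℕ)) :
    Measurable fun G : ClosedSubgroups => x ∈ localMaps G.1 := by
  have exists_extends_iff (G : ClosedSubgroups) :
      (∃ g : G.1, Extends g x) ↔ ∃ g ∈ G.1, g ∈ {g : Perm ℕ | ∀ p ∈ x, g p.1 = p.2} :=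
    ⟨fun ⟨g, hg⟩ => ⟨g, g.2, hg⟩, fun ⟨g, hgG, hg⟩ => ⟨⟨g, hgG⟩, hg⟩⟩
  refine (measurable_algClosed _).and ?_
  simp only [exists_extends_iff]
  exact measurable_exists_mem (isOpen_setOf_forall_apply_eq x Prod.fst Prod.snd)

theorem measurable_card_subMaps (x : Finset (ℕ × ℕ)) :
    Measurable fun G : ClosedSubgroups => (subMaps G.1 x).card := by
  simp only [subMaps, Finset.card_filter]
  exact Finset.measurable_sum _ fun y _ =>
    Measurable.ite (measurableSet_setOfPred.2 (measurable_mem_localMaps y)) measurable_const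
      measurable_const

theorem measurable_efType_localStructure (r : ℕ) {k : ℕ} (a : Fin k → Finset (ℕ × ℕ)) :
    Measurable fun G : ClosedSubgroups => (localStructure G.1).efType r a :=
  GradedStructure.measurable_efType (S := fun G : ClosedSubgroups => localStructure G.1)
    measurable_mem_localMaps (fun _ _ _ => measurable_const) measurable_card_subMaps r a

end Borel

/-- **Main Theorem.** The topological isomorphism relation on the space of
oligomorphic closed subgroups of `Sym(ω)` whose canonical structure has weak elimination
of imaginaries is smooth: there is a Borel map to a standard Borel space such that two
such groups are topologically isomorphic iff their images are equal. -/
theorem stmt_0 :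
    ∃ (Y : Type) (mY : MeasurableSpace Y) (f : OligWEISpace → Y),
      @StandardBorelSpace Y mY ∧ @Measurable OligWEISpace Y _ mY f ∧
      ∀ G H : OligWEISpace, TopIso G.1.1 H.1.1 ↔ f G = f H := by
  refine ⟨∀ r, EFType r 0, inferInstance,
    fun G r => (localStructure G.1.1).efType r Fin.elim0, inferInstance,
    measurable_pi_lambda _ fun r =>
      (measurable_efType_localStructure r _).comp measurable_subtype_coe, fun G H => ?_⟩
  have types_G := G.2.1.hasFinitelyManyTypes G.2.2
  have types_H := H.2.1.hasFinitelyManyTypes H.2.2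
  rw [topIso_iff_exists_isIso G.2.2 H.2.2 G.1.2 H.1.2,
    GradedStructure.exists_isIso_iff types_G types_H, funext_iff]

end Paper
end

section
/- Let (ℚ, <) be the countable dense linear order without endpoints. Then Aut(Aut(ℚ)) ≅ Aut(ℚ) ⋊ ℤ/2ℤ, i.e., the group of abstract group automorphisms of the group of order automorphisms of ℚ is isomorphic to the semidirect product of Aut(ℚ) (acting by inner automorphisms) with a group of order 2 (generated by the automorphism induced by conjugation by the order-reversing map q ↦ -q). -/
/-!
Point stabilizers in `Aut(ℚ)` have countable index and trivial normal core, and an automorphism of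
the group preserves both properties. Conversely, a subgroup `H` of countable index contains, for
every sequence of disjoint convex copies of `ℚ`, a prescribed commutator supported on one of them.
Hence the points to the left of which `H` contains all such commutators form a nonempty initial
segment, proper when the core of `H` is trivial, and `H` preserves it. By back-and-forth all
irrational cuts of `ℚ` are conjugate, so stabilizers of irrational cuts have uncountable index; the
cut is therefore rational and `H` fixes a point.

Thus every automorphism permutes the point stabilizers, and so is conjugation by a permutation of
`ℚ`. Affine maps show that this permutation is monotone or antitone.
-/

open Set MulAction

section CountableIndex

theorem countable_quotient_of_le {G : Type*} [Group G] {H K : Subgroup G} [Countable (G ⧸ H)]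
    (hHK : H ≤ K) : Countable (G ⧸ K) :=
  Function.Surjective.countable (f := Subgroup.quotientMapOfLE hHK) <|
    QuotientGroup.mk_surjective.forall.2 fun g => ⟨g, rfl⟩

theorem countable_quotient_comap {G G' : Type*} [Group G] [Group G'] (f : G →* G')
    (H : Subgroup G') [Countable (G' ⧸ H)] : Countable (G ⧸ H.comap f) := by
  let := MulAction.compHom (G' ⧸ H) f
  have hstab : stabilizer G ((1 : G') : G' ⧸ H) = H.comap f := by
    ext g
    change ((f g * 1 : G') : G' ⧸ H) = (1 : G') ↔ f g ∈ H
    rw [mul_one, QuotientGroup.eq, mul_one, inv_mem_iff]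
  rw [← hstab]
  exact (injective_ofQuotientStabilizer G ((1 : G') : G' ⧸ H)).countable

theorem countable_quotient_stabilizer (G : Type*) {X : Type*} [Group G] [MulAction G X]
    [Countable X] (x : X) : Countable (G ⧸ stabilizer G x) :=
  (injective_ofQuotientStabilizer G x).countable

theorem uncountable_set_of_infinite {α : Type*} [Infinite α] : Uncountable (Set α) := by
  rw [← not_countable_iff]
  intro h
  obtain ⟨f, hf⟩ := exists_injective_nat (Set α)
  exact Function.cantor_injective _ ((Infinite.natEmbedding α).injective.comp hf)

variable {ι κ : Type*} {G : ι → Type*} [∀ i, Group (G i)]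

-- If every block `π ⁻¹' {k}` missed a pattern, then inserting the `k`-th pattern into the block of
-- a representative of the `k`-th coset would diagonalize against all cosets.
theorem exists_block_eq_of_countable_quotient (K : Subgroup (∀ i, G i))
    [Countable ((∀ i, G i) ⧸ K)] [Infinite κ] (π : ι → κ) :
    ∃ k, ∀ g : ∀ i, G i, ∃ x ∈ K, ∀ i, π i = k → x i = g i := by
  obtain ⟨enum, henum⟩ := exists_surjective_nat ((∀ i, G i) ⧸ K)
  let coset : κ → (∀ i, G i) ⧸ K := enum ∘ Function.invFun (Infinite.natEmbedding κ)
  have hcoset : Function.Surjective coset :=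
    henum.comp (Function.invFun_surjective (Infinite.natEmbedding κ).injective)
  by_contra! hmiss
  choose g hg using hmiss
  let w : ∀ i, G i := fun i => (coset (π i)).out i * g (π i) i
  obtain ⟨k, hk⟩ := hcoset w
  have hmem : (coset k).out⁻¹ * w ∈ K := QuotientGroup.eq.1 (by rw [QuotientGroup.out_eq', hk])
  obtain ⟨i, rfl, hi⟩ := hg k _ hmem
  exact hi (by simp [w])

theorem exists_mem_eq_one_off_of_countable_quotient (K : Subgroup (∀ i, G i))
    [Countable ((∀ i, G i) ⧸ K)] {B : Set ι} (hB : B.Infinite) (s : ∀ i, G i) :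
    ∃ y ∈ K, (∃ i ∈ B, y i = s i) ∧ ∀ j ∉ B, y j = 1 := by
  classical
  let pattern (S : Set B) : ∀ i, G i := ((↑) '' S : Set ι).piecewise s 1
  obtain ⟨S, T, hST, hne⟩ : ∃ S T : Set B, (pattern S)⁻¹ * pattern T ∈ K ∧ S ≠ T := by
    have := hB.to_subtype
    have := uncountable_set_of_infinite (α := B)
    have : ¬ Function.Injective fun S => (pattern S : (∀ i, G i) ⧸ K) := fun h =>
      not_countable h.countable
    simpa [Function.Injective, QuotientGroup.eq] using this
  obtain ⟨i, hi⟩ : ∃ i, ¬ (i ∈ S ↔ i ∈ T) := not_forall.1 (mt Set.ext hne)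
  have hoff (j) (hj : j ∉ B) (S : Set B) : pattern S j = 1 := by simp [pattern, hj]
  by_cases hiS : i ∈ S
  · have hiT : i ∉ T := by tauto
    exact ⟨_, inv_mem hST, ⟨i, i.2, by simp [pattern, hiS, hiT]⟩, fun j hj => by simp [hoff j hj]⟩
  · have hiT : i ∈ T := by tauto
    exact ⟨_, hST, ⟨i, i.2, by simp [pattern, hiS, hiT]⟩, fun j hj => by simp [hoff j hj]⟩

-- An element of `K` that is trivial off a block on which `K` realizes every pattern has a
-- commutator with an element of `K` that is concentrated at a single index.
theorem exists_mulSingle_mem_of_countable_quotient [DecidableEq ι] [Infinite ι]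
    (K : Subgroup (∀ i, G i)) [Countable ((∀ i, G i) ⧸ K)] {c : ∀ i, G i}
    (hc : ∀ i, c i ∈ commutatorSet (G i)) : ∃ i, Pi.mulSingle i (c i) ∈ K := by
  choose u s hus using hc
  obtain ⟨e⟩ : Nonempty (ι ≃ ι × ι) := Cardinal.eq.1 (by simp)
  obtain ⟨k, hk⟩ := exists_block_eq_of_countable_quotient K fun i => (e i).1
  have hblock : {i | (e i).1 = k}.Infinite :=
    Set.infinite_of_injective_forall_mem (f := fun j => e.symm (k, j))
      (e.symm.injective.comp (Prod.mk_right_injective k)) (by simp)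
  obtain ⟨y, hy, ⟨i, hik, hi⟩, hoff⟩ := exists_mem_eq_one_off_of_countable_quotient K hblock s
  obtain ⟨x, hx, hxk⟩ := hk (Pi.mulSingle i (u i))
  have hcomm : x * y * x⁻¹ * y⁻¹ = Pi.mulSingle i (c i) := by
    funext j
    rcases eq_or_ne j i with rfl | hji
    · simp [hxk _ hik, hi, ← hus, commutatorElement_def]
    by_cases hjk : (e j).1 = k
    · simp [hxk _ hjk, hji]
    · simp [hoff _ hjk, hji]
  exact ⟨i, hcomm ▸ mul_mem (mul_mem (mul_mem hx hy) (inv_mem hx)) (inv_mem hy)⟩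

end CountableIndex

section Gluing

theorem strictMono_of_strictMonoOn_ordConnected {ι α : Type*} [LinearOrder α] {f : α → α}
    {I : ι → Set α} (hI : ∀ i, (I i).OrdConnected) (hfI : ∀ i x, f x ∈ I i ↔ x ∈ I i)
    (hf : ∀ i, StrictMonoOn f (I i)) (hoff : ∀ x, (∀ i, x ∉ I i) → f x = x) : StrictMono f := by
  intro x y hxy
  by_cases hcommon : ∃ i, x ∈ I i ∧ y ∈ I i
  · obtain ⟨i, hx, hy⟩ := hcommon
    exact hf i hx hy hxy
  push Not at hcommon
  have hfxy : f x < y := by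
    by_contra! hle
    by_cases hx : ∃ i, x ∈ I i
    · obtain ⟨i, hx⟩ := hx
      exact hcommon i hx ((hI i).out hx ((hfI i x).2 hx) ⟨hxy.le, hle⟩)
    · exact hxy.not_ge (hoff x (not_exists.1 hx) ▸ hle)
  by_contra! hle
  by_cases hy : ∃ i, y ∈ I i
  · obtain ⟨i, hy⟩ := hy
    exact hcommon i ((hfI i x).1 ((hI i).out ((hfI i y).2 hy) hy ⟨hle, hfxy.le⟩)) hy
  · exact hfxy.not_ge (hoff y (not_exists.1 hy) ▸ hle)

variable {ι α β : Type*} [LinearOrder α] [LinearOrder β]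

/-- A family of disjoint convex copies of `β` inside `α`. -/
structure IsConvexFamily (e : ι → β ↪o α) : Prop where
  ordConnected_range (i : ι) : (range (e i)).OrdConnected
  pairwise_disjoint : Pairwise fun i j => Disjoint (range (e i)) (range (e j))

namespace IsConvexFamily

variable {e : ι → β ↪o α}

theorem of_unique [Unique ι] (he : (range (e default)).OrdConnected) : IsConvexFamily e where
  ordConnected_range i := Unique.eq_default i ▸ he
  pairwise_disjoint _ _ hij := (hij (Subsingleton.elim _ _)).elim

theorem sigma_injective (he : IsConvexFamily e) :
    Function.Injective fun p : Σ _ : ι, β => e p.1 p.2 := by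
  rintro ⟨i, y⟩ ⟨j, z⟩ h
  obtain rfl : i = j := he.pairwise_disjoint.eq
    (not_disjoint_iff.2 ⟨_, mem_range_self y, mem_range.2 ⟨z, h.symm⟩⟩)
  simpa using h

/-- The permutation of `α` acting as `g i` on the `i`-th copy of `β` and fixing all other points. -/
noncomputable def perm (he : IsConvexFamily e) : (ι → Equiv.Perm β) →* Equiv.Perm α :=
  (Equiv.Perm.viaEmbeddingHom ⟨_, he.sigma_injective⟩).comp
    (Equiv.Perm.sigmaCongrRightHom fun _ : ι => β)

theorem perm_apply (he : IsConvexFamily e) (g : ι → Equiv.Perm β) (i : ι) (y : β) :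
    he.perm g (e i y) = e i (g i y) :=
  Equiv.Perm.viaEmbedding_apply _ ⟨_, he.sigma_injective⟩ ⟨i, y⟩

theorem perm_apply_of_notMem (he : IsConvexFamily e) (g : ι → Equiv.Perm β) {x : α}
    (hx : ∀ i, x ∉ range (e i)) : he.perm g x = x :=
  Equiv.Perm.viaEmbedding_apply_of_notMem _ _ _ <| by
    rintro ⟨⟨i, y⟩, rfl⟩
    exact hx i (mem_range_self y)

theorem perm_mem_range_iff (he : IsConvexFamily e) (g : ι → Equiv.Perm β) (i : ι) (x : α) :
    he.perm g x ∈ range (e i) ↔ x ∈ range (e i) := by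
  constructor
  · rintro ⟨y, hy⟩
    refine ⟨(g i).symm y, (he.perm g).injective ?_⟩
    rw [perm_apply, Equiv.apply_symm_apply, hy]
  · rintro ⟨y, rfl⟩
    exact ⟨g i y, (he.perm_apply g i y).symm⟩

theorem perm_strictMono (he : IsConvexFamily e) (g : ι → β ≃o β) :
    StrictMono (he.perm fun i => (g i).toEquiv) := by
  refine strictMono_of_strictMonoOn_ordConnected he.ordConnected_range
    (he.perm_mem_range_iff _) ?_ fun x hx => he.perm_apply_of_notMem _ hx
  rintro i _ ⟨y, rfl⟩ _ ⟨z, rfl⟩ hyz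
  simpa only [perm_apply, OrderIso.coe_toEquiv, OrderEmbedding.lt_iff_lt,
    OrderIso.lt_iff_lt] using hyz

/-- The order automorphism of `α` acting as `g i` on the `i`-th copy of `β` and fixing all other
points. -/
noncomputable def glue (he : IsConvexFamily e) : (ι → β ≃o β) →* (α ≃o α) where
  toFun g := ⟨he.perm fun i => (g i).toEquiv, (he.perm_strictMono g).le_iff_le⟩
  map_one' := by
    ext x
    exact DFunLike.congr_fun he.perm.map_one x
  map_mul' g h := by
    ext x
    exact DFunLike.congr_fun (he.perm.map_mul _ _) x

theorem glue_apply (he : IsConvexFamily e) (g : ι → β ≃o β) (i : ι) (y : β) :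
    he.glue g (e i y) = e i (g i y) :=
  he.perm_apply _ i y

theorem glue_apply_of_notMem (he : IsConvexFamily e) (g : ι → β ≃o β) {x : α}
    (hx : ∀ i, x ∉ range (e i)) : he.glue g x = x :=
  he.perm_apply_of_notMem _ hx

end IsConvexFamily

/-- Transport of automorphisms of `β` along a convex embedding `e` into `α`: act through `e` on its
range and fix all points off the range. -/
noncomputable def extendConvex (e : β ↪o α) (he : (range e).OrdConnected) :
    (β ≃o β) →* (α ≃o α) :=
  (IsConvexFamily.of_unique (e := fun _ : Unit => e) he).glue.comp (Pi.constMonoidHom Unit _)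

section extendConvex

variable (e : β ↪o α) (he : (range e).OrdConnected) (f : β ≃o β)

theorem extendConvex_apply (y : β) : extendConvex e he f (e y) = e (f y) :=
  IsConvexFamily.glue_apply _ _ () y

theorem extendConvex_apply_of_notMem {x : α} (hx : x ∉ range e) : extendConvex e he f x = x :=
  IsConvexFamily.glue_apply_of_notMem _ _ fun _ => hx

theorem eq_extendConvex {g : α ≃o α} (hg : ∀ y, g (e y) = e (f y)) (hoff : ∀ x ∉ range e, g x = x) :
    g = extendConvex e he f := by
  ext x
  by_cases hx : x ∈ range e
  · obtain ⟨y, rfl⟩ := hx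
    rw [hg, extendConvex_apply]
  · rw [hoff x hx, extendConvex_apply_of_notMem e he f hx]

theorem extendConvex_injective : Function.Injective (extendConvex e he) := by
  intro f g h
  ext y
  apply e.injective
  rw [← extendConvex_apply e he, ← extendConvex_apply e he, h]

theorem ordConnected_range_trans {e : β ↪o α} (he : (range e).OrdConnected) (h : α ≃o α) :
    (range (e.trans h.toOrderEmbedding)).OrdConnected := by
  rw [RelEmbedding.coe_trans, range_comp]
  exact ordConnected_image h

theorem conj_extendConvex (h : α ≃o α) :
    h * extendConvex e he f * h⁻¹ =
      extendConvex (e.trans h.toOrderEmbedding) (ordConnected_range_trans he h) f := by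
  refine eq_extendConvex _ _ _ (fun y => ?_) fun x hx => ?_
  · simp [extendConvex_apply]
  · have hx' : h⁻¹ x ∉ range e := fun ⟨y, hy⟩ => hx ⟨y, by simp [hy]⟩
    simp [extendConvex_apply_of_notMem e he f hx']

end extendConvex

theorem IsConvexFamily.glue_mulSingle [DecidableEq ι] {e : ι → β ↪o α} (he : IsConvexFamily e)
    (i : ι) (f : β ≃o β) :
    he.glue (Pi.mulSingle i f) = extendConvex (e i) (he.ordConnected_range i) f := by
  refine eq_extendConvex _ _ _ (fun y => by rw [glue_apply, Pi.mulSingle_eq_same]) fun x hx => ?_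
  by_cases hex : ∃ j, x ∈ range (e j)
  · obtain ⟨j, y, rfl⟩ := hex
    have hji : j ≠ i := by
      rintro rfl
      exact hx (mem_range_self y)
    rw [glue_apply, Pi.mulSingle_eq_of_ne hji, RelIso.coe_one, id]
  · exact he.glue_apply_of_notMem _ (not_exists.1 hex)

end Gluing

section CountableIndexAutomorphisms

open scoped Pointwise

variable {α β ι : Type*} [LinearOrder α] [LinearOrder β] (H : Subgroup (α ≃o α))

theorem IsConvexFamily.exists_extendConvex_mem [Infinite ι] {e : ι → β ↪o α}
    (he : IsConvexFamily e) [Countable ((α ≃o α) ⧸ H)] {f : ι → β ≃o β}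
    (hf : ∀ i, f i ∈ commutatorSet (β ≃o β)) :
    ∃ i, extendConvex (e i) (he.ordConnected_range i) (f i) ∈ H := by
  classical
  have := countable_quotient_comap he.glue H
  obtain ⟨i, hi⟩ := exists_mulSingle_mem_of_countable_quotient (H.comap he.glue) hf
  exact ⟨i, by rwa [Subgroup.mem_comap, he.glue_mulSingle] at hi⟩

/-- The points to the left of which `H` contains all commutators supported on a convex copy of `α`
that is bounded below. If `H` has countable index and trivial core, then this is a proper nonempty
`H`-invariant initial segment, which turns `H` into a stabilizer of a cut. -/
def lowerCut : Set α :=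
  {b | ∀ (e : α ↪o α) (he : (range e).OrdConnected), BddBelow (range e) → range e ⊆ Iio b →
    ∀ f ∈ commutatorSet (α ≃o α), extendConvex e he f ∈ H}

theorem isLowerSet_lowerCut : IsLowerSet (lowerCut H) :=
  fun _ _ hba hb e he hbdd hrange => hb e he hbdd (hrange.trans (Iio_subset_Iio hba))

theorem lowerCut_nonempty [Nonempty α] [Countable ((α ≃o α) ⧸ H)] : (lowerCut H).Nonempty := by
  by_contra! hempty
  have hbad : ∀ b : α, ∃ (a : α) (e : α ↪o α) (he : (range e).OrdConnected),
      range e ⊆ Ico a b ∧ ∃ f ∈ commutatorSet (α ≃o α), extendConvex e he f ∉ H := by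
    intro b
    have hb : b ∉ lowerCut H := hempty ▸ notMem_empty b
    simp only [lowerCut, mem_ofPred_eq, not_forall] at hb
    obtain ⟨e, he, ⟨a, ha⟩, hb, f, hf, hfH⟩ := hb
    exact ⟨a, e, he, fun x hx => ⟨ha hx, hb hx⟩, f, hf, hfH⟩
  choose a e he hrange f hf hfH using hbad
  let B (n : ℕ) : α := a^[n] (Classical.arbitrary α)
  have hB (n : ℕ) : range (e (B n)) ⊆ Ico (B (n + 1)) (B n) := by
    simpa only [B, Function.iterate_succ_apply'] using hrange (B n)
  have hanti : Antitone B := antitone_nat_of_succ_le fun n =>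
    let hmem := hB n (mem_range_self (B n))
    hmem.1.trans hmem.2.le
  have hfam : IsConvexFamily fun n => e (B n) :=
    ⟨fun n => he (B n), fun m n hmn =>
      (hanti.pairwise_disjoint_on_Ico_succ hmn).mono (hB m) (hB n)⟩
  obtain ⟨n, hn⟩ := hfam.exists_extendConvex_mem H fun n => hf (B n)
  exact hfH (B n) hn

variable {H}

theorem lowerCut_ne_univ (hH : H.normalCore = ⊥) {e : α ↪o α} (he : (range e).OrdConnected)
    {a b : α} (hrange : range e ⊆ Ioo a b) {f : α ≃o α} (hf : f ∈ commutatorSet (α ≃o α))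
    (hf1 : f ≠ 1) : lowerCut H ≠ univ := by
  intro huniv
  have hcore : extendConvex e he f ∈ H.normalCore := by
    intro h
    rw [conj_extendConvex]
    have hh : h b ∈ lowerCut H := huniv ▸ mem_univ _
    refine hh _ _ ⟨h a, ?_⟩ ?_ f hf
    · rintro _ ⟨y, rfl⟩
      exact h.monotone (hrange (mem_range_self y)).1.le
    · rintro _ ⟨y, rfl⟩
      exact h.strictMono (hrange (mem_range_self y)).2
  rw [hH, Subgroup.mem_bot, ← map_one (extendConvex e he)] at hcore
  exact hf1 (extendConvex_injective e he hcore)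

theorem map_mem_lowerCut {h : α ≃o α} (hh : h ∈ H) {b : α} (hb : b ∈ lowerCut H) :
    h b ∈ lowerCut H := by
  intro e he ⟨a, ha⟩ hrange f hf
  have hconj : h⁻¹ * extendConvex e he f * h⁻¹⁻¹ ∈ H := by
    rw [conj_extendConvex]
    refine hb _ _ ⟨h⁻¹ a, ?_⟩ ?_ f hf
    · rintro _ ⟨y, rfl⟩
      exact (h⁻¹).monotone (ha (mem_range_self y))
    · rintro _ ⟨y, rfl⟩
      exact h.symm_apply_lt.2 (hrange (mem_range_self y))
  rwa [H.mul_mem_cancel_right (by simpa using hh),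
    H.mul_mem_cancel_left (inv_mem hh)] at hconj

theorem le_stabilizer_lowerCut : H ≤ stabilizer (α ≃o α) (lowerCut H) := fun h hh =>
  mem_stabilizer_set.2 fun b =>
    ⟨fun hb => by simpa using map_mem_lowerCut (inv_mem hh) hb, map_mem_lowerCut hh⟩

end CountableIndexAutomorphisms

section AffineAutomorphisms

variable {K : Type*} [Field K] [LinearOrder K] [IsStrictOrderedRing K]

/-- The affine automorphism `x ↦ a * x + b` of the ordered field `K`. -/
def affine (a b : K) (ha : 0 < a) : K ≃o K :=
  (OrderIso.mulLeft₀ a ha).trans (OrderIso.addRight b)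

theorem affine_apply (a b : K) (ha : 0 < a) (x : K) : affine a b ha x = a * x + b := rfl

theorem exists_commutator_ne_one (K : Type*) [Field K] [LinearOrder K] [IsStrictOrderedRing K] :
    ∃ f ∈ commutatorSet (K ≃o K), f ≠ 1 := by
  refine ⟨_, ⟨affine 2 0 two_pos, affine 1 1 one_pos, rfl⟩, fun h => ?_⟩
  have h0 := DFunLike.congr_fun (commutatorElement_eq_one_iff_mul_comm.1 h) 0
  norm_num [affine_apply] at h0

theorem exists_orderEmbedding_range_eq_Ioo (K : Type*) [Field K] [LinearOrder K]
    [IsStrictOrderedRing K] : ∃ e : K ↪o K, range e = Ioo (-1) 1 := by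
  refine ⟨(orderIsoIooNegOneOne K).toOrderEmbedding.trans (OrderEmbedding.subtype _), ?_⟩
  rw [RelEmbedding.coe_trans, range_comp, OrderIso.coe_toOrderEmbedding, EquivLike.range_eq_univ,
    image_univ, OrderEmbedding.coe_subtype, Subtype.range_coe]

instance : IsPretransitive (K ≃o K) K where
  exists_smul_eq x y := ⟨affine 1 (y - x) one_pos, by simp [affine_apply, RelIso.smul_def]⟩

theorem eq_of_stabilizer_le_stabilizer {p q : K}
    (h : stabilizer (K ≃o K) p ≤ stabilizer (K ≃o K) q) : p = q := by
  have hp : affine 2 (-p) two_pos ∈ stabilizer (K ≃o K) p := by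
    simp [mem_stabilizer_iff, RelIso.smul_def, affine_apply, two_mul]
  have hq := mem_stabilizer_iff.1 (h hp)
  rw [RelIso.smul_def, affine_apply] at hq
  linarith

-- The affine automorphism through `0 ↦ x` and `1 ↦ y` reduces every comparison to that of
-- `h 0` and `h 1`.
theorem strictMono_or_strictAnti_of_equivariant {h : K → K} {α : (K ≃o K) → (K ≃o K)}
    (hinj : Function.Injective h) (hα : ∀ g x, α g (h x) = h (g x)) :
    StrictMono h ∨ StrictAnti h := by
  have hline {x y : K} (hxy : x < y) : ∃ g : K ≃o K, g 0 = x ∧ g 1 = y :=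
    ⟨affine (y - x) x (sub_pos.2 hxy), by simp [affine_apply], by simp [affine_apply]⟩
  rcases (hinj.ne zero_ne_one).lt_or_gt with h01 | h10
  · left
    intro x y hxy
    obtain ⟨g, rfl, rfl⟩ := hline hxy
    rw [← hα, ← hα]
    exact (α g).strictMono h01
  · right
    intro x y hxy
    obtain ⟨g, rfl, rfl⟩ := hline hxy
    rw [← hα, ← hα]
    exact (α g).strictMono h10

end AffineAutomorphisms

section Gaps

open scoped Pointwise

variable {α : Type*} [LinearOrder α]

/-- The lower part of a Dedekind cut of `α` that is realized by no element of `α`. -/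
structure IsGap (L : Set α) : Prop where
  isLowerSet : IsLowerSet L
  nonempty : L.Nonempty
  compl_nonempty : Lᶜ.Nonempty
  not_isGreatest (x : α) : ¬ IsGreatest L x
  not_isLeast_compl (x : α) : ¬ IsLeast Lᶜ x

/-- A linear order is the lexicographic sum of any lower set and its complement. -/
noncomputable def lowerSetSumCompl {L : Set α} (hL : IsLowerSet L) :
    L ⊕ₗ (Lᶜ : Set α) ≃o α := by
  classical
  refine StrictMono.orderIsoOfSurjective (fun p => Equiv.Set.sumCompl L (ofLex p)) ?_
    ((Equiv.Set.sumCompl L).surjective.comp ofLex.surjective)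
  rintro (x | x) (y | y) hxy
  · exact (Sum.Lex.inl_lt_inl_iff (a := x) (b := y)).1 hxy
  · exact lt_of_not_ge fun hyx => y.2 (hL hyx x.2)
  · exact (Sum.Lex.not_inr_lt_inl hxy).elim
  · exact (Sum.Lex.inr_lt_inr_iff (a := x) (b := y)).1 hxy

theorem lowerSetSumCompl_mem_iff {L : Set α} (hL : IsLowerSet L) (p : L ⊕ₗ (Lᶜ : Set α)) :
    lowerSetSumCompl hL p ∈ L ↔ (ofLex p).isLeft := by
  rcases p with x | x
  · exact iff_of_true x.2 rfl
  · exact iff_of_false x.2 Bool.false_ne_true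

theorem noMaxOrder_of_not_isGreatest {S : Set α} (hS : ∀ x, ¬ IsGreatest S x) :
    NoMaxOrder S where
  exists_gt x := by
    by_contra! hx
    exact hS x ⟨x.2, fun y hy => hx ⟨y, hy⟩⟩

theorem noMinOrder_of_not_isLeast {S : Set α} (hS : ∀ x, ¬ IsLeast S x) : NoMinOrder S where
  exists_lt x := by
    by_contra! hx
    exact hS x ⟨x.2, fun y hy => hx ⟨y, hy⟩⟩

theorem nonempty_orderIso_of_ordConnected [Countable α] [DenselyOrdered α] {S T : Set α}
    (hS : S.OrdConnected) (hT : T.OrdConnected) (hS₀ : S.Nonempty) (hT₀ : T.Nonempty)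
    (hSmax : ∀ x, ¬ IsGreatest S x) (hTmax : ∀ x, ¬ IsGreatest T x)
    (hSmin : ∀ x, ¬ IsLeast S x) (hTmin : ∀ x, ¬ IsLeast T x) : Nonempty (S ≃o T) := by
  have := hS₀.to_subtype
  have := hT₀.to_subtype
  have := noMaxOrder_of_not_isGreatest hSmax
  have := noMaxOrder_of_not_isGreatest hTmax
  have := noMinOrder_of_not_isLeast hSmin
  have := noMinOrder_of_not_isLeast hTmin
  exact Order.iso_of_countable_dense S T

theorem not_isLeast_of_isLowerSet [NoMinOrder α] {L : Set α} (hL : IsLowerSet L) (x : α) :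
    ¬ IsLeast L x := fun h =>
  let ⟨_, hy⟩ := exists_lt x
  (h.2 (hL hy.le h.1)).not_gt hy

theorem not_isGreatest_of_isUpperSet [NoMaxOrder α] {U : Set α} (hU : IsUpperSet U) (x : α) :
    ¬ IsGreatest U x := fun h =>
  let ⟨_, hy⟩ := exists_gt x
  (h.2 (hU hy.le h.1)).not_gt hy

namespace IsGap

variable {L M : Set α}

theorem exists_smul_eq [Countable α] [DenselyOrdered α] [NoMinOrder α] [NoMaxOrder α]
    (hL : IsGap L) (hM : IsGap M) : ∃ h : α ≃o α, h • L = M := by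
  obtain ⟨f⟩ := nonempty_orderIso_of_ordConnected hL.isLowerSet.ordConnected
    hM.isLowerSet.ordConnected hL.nonempty hM.nonempty hL.not_isGreatest hM.not_isGreatest
    (not_isLeast_of_isLowerSet hL.isLowerSet) (not_isLeast_of_isLowerSet hM.isLowerSet)
  obtain ⟨g⟩ := nonempty_orderIso_of_ordConnected hL.isLowerSet.compl.ordConnected
    hM.isLowerSet.compl.ordConnected hL.compl_nonempty hM.compl_nonempty
    (not_isGreatest_of_isUpperSet hL.isLowerSet.compl)
    (not_isGreatest_of_isUpperSet hM.isLowerSet.compl)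
    hL.not_isLeast_compl hM.not_isLeast_compl
  let h := ((lowerSetSumCompl hL.isLowerSet).symm.trans (f.sumLexCongr g)).trans
    (lowerSetSumCompl hM.isLowerSet)
  have hmem (x : α) : h x ∈ M ↔ x ∈ L := by
    obtain ⟨p, rfl⟩ := (lowerSetSumCompl hL.isLowerSet).surjective x
    simp only [h, OrderIso.trans_apply, OrderIso.symm_apply_apply, lowerSetSumCompl_mem_iff]
    rcases p with x | x <;> rfl
  exact ⟨h, by ext x; rw [mem_smul_set_iff_inv_smul_mem, ← hmem]; simp⟩

theorem of_irrational {r : ℝ} (hr : Irrational r) : IsGap (((↑) : ℚ → ℝ) ⁻¹' Iio r) where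
  isLowerSet := (isLowerSet_Iio r).preimage Rat.cast_mono
  nonempty := exists_rat_lt r
  compl_nonempty := (exists_rat_gt r).imp fun _ h => h.not_gt
  not_isGreatest x hx := by
    have hxr : (x : ℝ) < r := hx.1
    obtain ⟨y, hxy, hyr⟩ := exists_rat_btwn hxr
    exact (hx.2 hyr).not_gt (Rat.cast_lt.1 hxy)
  not_isLeast_compl x hx := by
    have hrx : ¬ (x : ℝ) < r := hx.1
    obtain ⟨y, hry, hyx⟩ := exists_rat_btwn ((not_lt.1 hrx).lt_of_ne (hr.ne_rat x))
    exact (hx.2 hry.not_gt).not_gt (Rat.cast_lt.1 hyx)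

theorem uncountable_orbit {L : Set ℚ} (hL : IsGap L) : Uncountable (orbit (ℚ ≃o ℚ) L) := by
  rw [← not_countable_iff]
  intro hcountable
  let cut (r : {r : ℝ // Irrational r}) : orbit (ℚ ≃o ℚ) L :=
    ⟨((↑) : ℚ → ℝ) ⁻¹' Iio r, hL.exists_smul_eq (of_irrational r.2)⟩
  have hcut : Function.Injective cut := fun r s hrs =>
    Subtype.ext (eq_of_forall_rat_lt_iff_lt (Set.ext_iff.1 (congrArg Subtype.val hrs)))
  have hirr : {r : ℝ | Irrational r}.Countable := hcut.countable
  refine not_countable_univ (((countable_range ((↑) : ℚ → ℝ)).union hirr).mono fun r _ => ?_)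
  exact Classical.em (r ∈ range ((↑) : ℚ → ℝ))

end IsGap

theorem smul_eq_of_isGreatest {L : Set α} {p : α} (hp : IsGreatest L p) {g : α ≃o α}
    (hg : g • L = L) : g • p = p := by
  have hgp : IsGreatest (g • L) (g • p) := g.monotone.map_isGreatest hp
  exact (hg ▸ hgp).unique hp

theorem smul_eq_of_isLeast {U : Set α} {p : α} (hp : IsLeast U p) {g : α ≃o α}
    (hg : g • U = U) : g • p = p := by
  have hgp : IsLeast (g • U) (g • p) := g.monotone.map_isLeast hp
  exact (hg ▸ hgp).unique hp

theorem exists_le_stabilizer_of_le_stabilizer_lowerSet {H : Subgroup (ℚ ≃o ℚ)}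
    [Countable ((ℚ ≃o ℚ) ⧸ H)] {L : Set ℚ} (hL : IsLowerSet L) (hL₀ : L.Nonempty)
    (hL₁ : L ≠ univ) (hHL : H ≤ stabilizer (ℚ ≃o ℚ) L) : ∃ p : ℚ, H ≤ stabilizer (ℚ ≃o ℚ) p := by
  have hgap : ¬ IsGap L := by
    intro hgap
    have := countable_quotient_of_le hHL
    have := hgap.uncountable_orbit
    exact not_countable (orbitEquivQuotientStabilizer (ℚ ≃o ℚ) L).injective.countable
  by_cases hmax : ∃ p, IsGreatest L p
  · obtain ⟨p, hp⟩ := hmax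
    exact ⟨p, fun g hg => smul_eq_of_isGreatest hp (hHL hg)⟩
  obtain ⟨p, hp⟩ : ∃ p, IsLeast Lᶜ p := by
    by_contra! hmin
    exact hgap ⟨hL, hL₀, nonempty_compl.2 hL₁, not_exists.1 hmax, hmin⟩
  exact ⟨p, fun g hg => smul_eq_of_isLeast hp (by rw [smul_set_compl, hHL hg])⟩

theorem exists_le_stabilizer_of_normalCore_eq_bot {H : Subgroup (ℚ ≃o ℚ)}
    [Countable ((ℚ ≃o ℚ) ⧸ H)] (hH : H.normalCore = ⊥) :
    ∃ p : ℚ, H ≤ stabilizer (ℚ ≃o ℚ) p := by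
  obtain ⟨e, he⟩ := exists_orderEmbedding_range_eq_Ioo ℚ
  obtain ⟨f, hf, hf1⟩ := exists_commutator_ne_one ℚ
  exact exists_le_stabilizer_of_le_stabilizer_lowerSet (isLowerSet_lowerCut H) (lowerCut_nonempty H)
    (lowerCut_ne_univ hH (he ▸ ordConnected_Ioo) he.le hf hf1) le_stabilizer_lowerCut

end Gaps

section Reconstruction

variable {G X : Type*} [Group G] [MulAction G X]

theorem normalCore_comap_stabilizer_eq_bot [FaithfulSMul G X] [IsPretransitive G X]
    (α : MulAut G) (x : X) : ((stabilizer G x).comap α.toMonoidHom).normalCore = ⊥ := by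
  rw [eq_bot_iff]
  intro k hk
  rw [Subgroup.mem_bot, ← map_eq_one_iff α α.injective]
  refine FaithfulSMul.eq_of_smul_eq_smul fun y : X => ?_
  obtain ⟨g, rfl⟩ := exists_smul_eq G y x
  have hg : α (α.symm g * k * (α.symm g)⁻¹) • g • y = g • y := hk (α.symm g)
  simpa [mul_smul] using hg

theorem eq_self_of_forall_smul_comm (hsep : ∀ x y : X, stabilizer G x ≤ stabilizer G y → x = y)
    {h : X → X} (hh : ∀ (g : G) x, g • h x = h (g • x)) (x : X) : h x = x :=
  (hsep x (h x) fun g hg => by rw [mem_stabilizer_iff, hh, hg]).symm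

theorem exists_comap_stabilizer_eq (hsep : ∀ x y : X, stabilizer G x ≤ stabilizer G y → x = y)
    (hfix : ∀ (α : MulAut G) (x : X),
      ∃ y : X, (stabilizer G x).comap α.toMonoidHom ≤ stabilizer G y)
    (α : MulAut G) (x : X) : ∃ y : X, (stabilizer G x).comap α.toMonoidHom = stabilizer G y := by
  obtain ⟨y, hy⟩ := hfix α x
  obtain ⟨z, hz⟩ := hfix α.symm y
  obtain rfl : x = z := hsep x z fun g hg => hz (hy (by simpa using hg))
  exact ⟨y, hy.antisymm fun g hg => hz (by simpa using hg)⟩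

theorem exists_perm_smul_eq [IsPretransitive G X]
    (hsep : ∀ x y : X, stabilizer G x ≤ stabilizer G y → x = y)
    (hfix : ∀ (α : MulAut G) (x : X),
      ∃ y : X, (stabilizer G x).comap α.toMonoidHom ≤ stabilizer G y)
    (α : MulAut G) : ∃ h : Equiv.Perm X, ∀ (g : G) x, α g • h x = h (g • x) := by
  choose k hk using exists_comap_stabilizer_eq hsep hfix α
  have hmem (g : G) (x : X) : g • k x = k x ↔ α g • x = x := by
    rw [← mem_stabilizer_iff, ← hk, Subgroup.mem_comap]
    rfl
  have hequiv (g : G) (x : X) : g • k x = k (α g • x) := by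
    refine hsep _ _ fun s hs => ?_
    have hconj : (g⁻¹ * s * g) • k x = k x := by
      rw [mul_smul, mul_smul, inv_smul_eq_iff]
      exact hs
    rw [hmem] at hconj
    simpa [mul_smul, inv_smul_eq_iff, ← hmem] using hconj
  have hinj : Function.Injective k := fun x y hxy => hsep x y fun g hg => by
    rw [mem_stabilizer_iff, ← α.apply_symm_apply g, ← hmem] at hg ⊢
    rwa [← hxy]
  have hsurj : Function.Surjective k := fun y => by
    obtain ⟨x⟩ : Nonempty X := ⟨y⟩
    obtain ⟨g, hg⟩ := exists_smul_eq G (k x) y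
    exact ⟨_, (hequiv g x).symm.trans hg⟩
  let e := Equiv.ofBijective k ⟨hinj, hsurj⟩
  refine ⟨e.symm, fun g x => e.injective ?_⟩
  rw [e.apply_symm_apply]
  exact (hequiv g _).symm.trans (congrArg (g • ·) (e.apply_symm_apply x))

end Reconstruction

section Semidirect

/-- The homomorphism from the group of order two determined by an involution. -/
def involutionHom {M : Type*} [Group M] (σ : M) (hσ : σ * σ = 1) :
    Multiplicative (ZMod 2) →* M :=
  AddMonoidHom.toMultiplicativeLeft <|
    ZMod.lift 2 ⟨zmultiplesHom (Additive M) (.ofMul σ), by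
      rw [zmultiplesHom_apply, natCast_zsmul, two_nsmul, ← ofMul_mul, hσ, ofMul_one]⟩

theorem involutionHom_ofAdd_one {M : Type*} [Group M] (σ : M) (hσ : σ * σ = 1) :
    involutionHom σ hσ (.ofAdd 1) = σ := by
  change Additive.toMul (ZMod.lift (A := Additive M) 2 _ ((1 : ℤ) : ZMod 2)) = σ
  rw [ZMod.lift_coe, zmultiplesHom_apply, one_zsmul, toMul_ofMul]

theorem nonempty_mulEquiv_semidirectProduct {N : Type*} [Group N] {σ : MulAut N}
    (hσ : σ * σ = 1) (hconj : Function.Injective (MulAut.conj (G := N)))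
    (hout : σ ∉ (MulAut.conj (G := N)).range)
    (hall : ∀ α : MulAut N, α ∈ (MulAut.conj (G := N)).range ∨
      α * σ ∈ (MulAut.conj (G := N)).range) :
    Nonempty (MulAut N ≃* N ⋊[involutionHom σ hσ] Multiplicative (ZMod 2)) := by
  let f : N ⋊[involutionHom σ hσ] Multiplicative (ZMod 2) →* MulAut N :=
    SemidirectProduct.lift MulAut.conj (involutionHom σ hσ) fun x => by ext; simp
  have hf (n : N) (x : Multiplicative (ZMod 2)) :
      f ⟨n, x⟩ = MulAut.conj n * involutionHom σ hσ x := rfl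
  refine ⟨(MulEquiv.ofBijective f ⟨(injective_iff_map_eq_one f).2 ?_, fun α => ?_⟩).symm⟩
  · rintro ⟨n, x⟩ hnx
    rw [hf] at hnx
    have hx : ∀ x : Multiplicative (ZMod 2), x = 1 ∨ x = .ofAdd 1 := by decide
    obtain rfl | rfl := hx x
    · rw [map_one, mul_one, map_eq_one_iff _ hconj] at hnx
      rw [hnx]; rfl
    · rw [involutionHom_ofAdd_one] at hnx
      exact (hout ⟨n⁻¹, by rw [map_inv, inv_eq_of_mul_eq_one_right hnx]⟩).elim
  · obtain ⟨n, hn⟩ | ⟨n, hn⟩ := hall α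
    · exact ⟨⟨n, 1⟩, by rw [hf, hn, map_one, mul_one]⟩
    · exact ⟨⟨n, .ofAdd 1⟩, by rw [hf, hn, involutionHom_ofAdd_one, mul_assoc, hσ, mul_one]⟩

end Semidirect

section Reflection

theorem mem_range_conj_of_strictMono {X : Type*} [LinearOrder X] {α : MulAut (X ≃o X)}
    {h : Equiv.Perm X} (hmono : StrictMono h) (hα : ∀ g x, α g (h x) = h (g x)) :
    α ∈ (MulAut.conj (G := X ≃o X)).range := by
  refine ⟨⟨h, hmono.le_iff_le⟩, ?_⟩
  ext g x
  obtain ⟨y, rfl⟩ := h.surjective x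
  rw [hα]
  exact congrArg (fun z => h (g z)) (h.symm_apply_apply y)

section negConj

variable {A : Type*} [AddCommGroup A] [LinearOrder A] [IsOrderedAddMonoid A]

/-- The automorphism of `A ≃o A` given by conjugation with the order-reversing map `x ↦ -x`. -/
def negConj (A : Type*) [AddCommGroup A] [LinearOrder A] [IsOrderedAddMonoid A] :
    MulAut (A ≃o A) where
  toFun g := ⟨(Equiv.neg A).trans (g.toEquiv.trans (Equiv.neg A)), by simp⟩
  invFun g := ⟨(Equiv.neg A).trans (g.toEquiv.trans (Equiv.neg A)), by simp⟩
  left_inv g := by ext; simp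
  right_inv g := by ext; simp
  map_mul' g h := by ext; simp

theorem negConj_apply_apply (g : A ≃o A) (x : A) : negConj A g x = -g (-x) := rfl

theorem negConj_mul_self : negConj A * negConj A = 1 := by
  ext g x
  simp [negConj_apply_apply]

end negConj

variable {K : Type*} [Field K] [LinearOrder K] [IsStrictOrderedRing K]

theorem eq_self_of_forall_map_comm {h : K → K} (hh : ∀ (g : K ≃o K) x, g (h x) = h (g x)) (x : K) :
    h x = x :=
  eq_self_of_forall_smul_comm (fun _ _ => eq_of_stabilizer_le_stabilizer) hh x

theorem conj_orderIso_injective :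
    Function.Injective (MulAut.conj (G := K ≃o K)) := by
  refine (injective_iff_map_eq_one _).2 fun n hn => ?_
  ext x
  refine eq_self_of_forall_map_comm (fun g y => ?_) x
  have hng := DFunLike.congr_fun (DFunLike.congr_fun hn g) (n y)
  simpa using hng.symm

theorem negConj_notMem_range_conj :
    negConj K ∉ (MulAut.conj (G := K ≃o K)).range := by
  rintro ⟨n, hn⟩
  have hneg (x : K) : -n x = x := by
    refine eq_self_of_forall_map_comm (h := fun x => -n x) (fun g y => ?_) x
    have hng := DFunLike.congr_fun (DFunLike.congr_fun hn g) (n y)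
    simpa [negConj_apply_apply, neg_eq_iff_eq_neg] using hng.symm
  have h01 := n.strictMono zero_lt_one
  linarith [hneg 0, hneg 1]

theorem mem_range_conj_or_mul_negConj_mem (α : MulAut (K ≃o K)) {h : Equiv.Perm K}
    (hα : ∀ g x, α g (h x) = h (g x)) :
    α ∈ (MulAut.conj (G := K ≃o K)).range ∨
      α * negConj K ∈ (MulAut.conj (G := K ≃o K)).range := by
  refine (strictMono_or_strictAnti_of_equivariant h.injective hα).imp
    (mem_range_conj_of_strictMono · hα) fun hanti => ?_
  refine mem_range_conj_of_strictMono (h := (Equiv.neg K).trans h)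
    (hanti.comp fun _ _ => neg_lt_neg) fun g x => ?_
  simp [hα, negConj_apply_apply]

end Reflection

/-- Let `ℚ` be the countable dense linear order without endpoints. Then
`Aut(Aut(ℚ)) ≅ Aut(ℚ) ⋊ ℤ/2ℤ`: the group of abstract group automorphisms of the group
`Aut(ℚ)` of order automorphisms of the rationals is isomorphic to a semidirect product of
`Aut(ℚ)` with a group of order `2`. -/
theorem stmt_5 :
    ∃ φ : Multiplicative (ZMod 2) →* MulAut (ℚ ≃o ℚ),
      Nonempty (MulAut (ℚ ≃o ℚ) ≃*
        SemidirectProduct (ℚ ≃o ℚ) (Multiplicative (ZMod 2)) φ) := by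
  have hsep (p q : ℚ) : stabilizer (ℚ ≃o ℚ) p ≤ stabilizer (ℚ ≃o ℚ) q → p = q :=
    eq_of_stabilizer_le_stabilizer
  have hfix (α : MulAut (ℚ ≃o ℚ)) (p : ℚ) :
      ∃ q : ℚ, (stabilizer (ℚ ≃o ℚ) p).comap α.toMonoidHom ≤ stabilizer (ℚ ≃o ℚ) q := by
    have := countable_quotient_stabilizer (ℚ ≃o ℚ) p
    have := countable_quotient_comap α.toMonoidHom (stabilizer (ℚ ≃o ℚ) p)
    exact exists_le_stabilizer_of_normalCore_eq_bot (normalCore_comap_stabilizer_eq_bot α p)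
  refine ⟨_, nonempty_mulEquiv_semidirectProduct negConj_mul_self conj_orderIso_injective
    negConj_notMem_range_conj fun α => ?_⟩
  obtain ⟨h, hh⟩ := exists_perm_smul_eq hsep hfix α
  exact mem_range_conj_or_mul_negConj_mem α hh
end
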